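/- For all positive integers n and t, the anti-Ramsey number of t edge-disjoint rainbow spanning trees in the complete graph K_n satisfies: r(K_n,t) = C(n-2,2) + t if n ≥ 2t+2; r(K_n,t) = C(n-1,2) if n = 2t+1; r(K_n,t) = C(n,2) - t if n = 2t; and r(K_n,t) = C(n,2) if n < 2t. Here C(a,2) denotes the binomial coefficient a choose 2. -/

import Mathlib

open Finset
open scoped Classical

/-- The set of non-crossing edges of `G` with respect to a partition `P` of the
vertex set: edges whose two endpoints lie in the same part of `P`. -/
noncomputable def edgesNonCrossing {V : Type} [Fintype V] (G : SimpleGraph V)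
    (P : Finpartition (Finset.univ : Finset V)) : Finset (Sym2 V) :=
  G.edgeFinset.filter (fun e => ∃ p ∈ P.parts, ∀ v ∈ e, v ∈ p)

/-- The set of crossing edges of `G` with respect to a partition `P` of the
vertex set: edges whose endpoints lie in different parts of `P`. -/
noncomputable def edgesCrossing {V : Type} [Fintype V] (G : SimpleGraph V)
    (P : Finpartition (Finset.univ : Finset V)) : Finset (Sym2 V) :=
  G.edgeFinset.filter (fun e => ¬ ∃ p ∈ P.parts, ∀ v ∈ e, v ∈ p)

/-- `G`, edge-colored by `c`, contains `t` pairwise edge-disjoint rainbow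
spanning trees. -/
def HasRainbowSpanningTrees {V : Type} [Fintype V] (G : SimpleGraph V)
    (c : Sym2 V → ℕ) (t : ℕ) : Prop :=
  ∃ T : Fin t → SimpleGraph V,
    (∀ i, T i ≤ G) ∧ (∀ i, (T i).IsTree) ∧
    (∀ i, Set.InjOn c ((T i).edgeSet)) ∧
    (∀ i j, i ≠ j → Disjoint ((T i).edgeSet) ((T j).edgeSet))

/-- The anti-Ramsey number `r(G,t)`: the maximum number of colors in an
edge-coloring of `G` containing no `t` pairwise edge-disjoint rainbow spanning
trees. -/
noncomputable def antiRamsey {V : Type} [Fintype V] (G : SimpleGraph V) (t : ℕ) : ℕ :=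
  sSup {m | ∃ c : Sym2 V → ℕ, (G.edgeFinset.image c).card = m ∧
    ¬ HasRainbowSpanningTrees G c t}

/-- `max_{P : |P| ≥ 3} { |E(P,G)| + t(|P|-2) }`. -/
noncomputable def maxNonCross3 {V : Type} [Fintype V] (G : SimpleGraph V) (t : ℕ) : ℕ :=
  sSup {m | ∃ P : Finpartition (Finset.univ : Finset V), 3 ≤ P.parts.card ∧
    m = (edgesNonCrossing G P).card + t * (P.parts.card - 2)}

/-- `f_G(s)`: the maximum of `|E(P,G)|` over partitions of the vertex set into
exactly `s` parts. -/
noncomputable def fMax {V : Type} [Fintype V] (G : SimpleGraph V) (s : ℕ) : ℕ :=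
  sSup {m | ∃ P : Finpartition (Finset.univ : Finset V), P.parts.card = s ∧
    m = (edgesNonCrossing G P).card}

/-- The number of edges of `G` induced by a set `p` of vertices. -/
noncomputable def edgesWithin {V : Type} [Fintype V] (G : SimpleGraph V) (p : Finset V) : ℕ :=
  (G.edgeFinset.filter (fun e => ∀ v ∈ e, v ∈ p)).card

/-- One splitting step: remove a single vertex from a currently largest part
(measured by the number of non-crossing edges it induces) to form a new
singleton part. -/
def SplitStep {V : Type} [Fintype V] (G : SimpleGraph V)
    (P Q : Finpartition (Finset.univ : Finset V)) : Prop :=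
  ∃ p ∈ P.parts, (∀ q ∈ P.parts, edgesWithin G q ≤ edgesWithin G p) ∧
    ∃ v ∈ p, p.erase v ≠ ∅ ∧
      Q.parts = insert {v} (insert (p.erase v) (P.parts.erase p))


theorem mu_union {α : Type} [DecidableEq α] {t N : ℕ} (E : Finset α) (r : Finset α → ℕ)
    (hmono : ∀ X Y, X ⊆ Y → r X ≤ r Y)
    (hsub : ∀ X Y, r (X ∪ Y) + r (X ∩ Y) ≤ r X + r Y)
    (hle : ∀ X, r X ≤ N) :
    ∀ (k : ℕ) (A : α → Finset (Fin t)), (∑ e ∈ E, (A e).card = k) →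
    (∀ X, X ⊆ E → t * N ≤ (E \ X).card + ∑ i, r (X.filter (fun e => i ∈ A e))) →
    ∃ A' : α → Finset (Fin t), (∀ e ∈ E, A' e ⊆ A e) ∧ (∀ e ∈ E, (A' e).card ≤ 1) ∧
      ∀ i, r (E.filter (fun e => i ∈ A' e)) = N := by
  intro k
  induction k using Nat.strong_induction_on with
  | _ k ih =>
  intro A hk hA
  by_cases hs : ∀ e ∈ E, (A e).card ≤ 1
  · refine ⟨A, fun _ _ => subset_rfl, hs, ?_⟩
    have h := hA E subset_rfl
    rw [Finset.sdiff_self, card_empty, zero_add] at h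
    intro i
    by_contra hi
    have h2 : ∑ i, r (E.filter (fun e => i ∈ A e)) < ∑ i : Fin t, N :=
      Finset.sum_lt_sum (fun i _ => hle _) ⟨i, mem_univ _, lt_of_le_of_ne (hle _) hi⟩
    simp at h2
    omega
  · push Not at hs
    obtain ⟨e, heE, he⟩ := hs
    obtain ⟨i, hi, j, hj, hij⟩ := Finset.one_lt_card.1 he
    -- reduced availability
    let B : Fin t → α → Finset (Fin t) := fun l => Function.update A e ((A e).erase l)
    have hBsub : ∀ l x, B l x ⊆ A x := by
      intro l x
      by_cases hx : x = e
      · subst hx; simp [B, Finset.erase_subset]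
      · simp [B, hx]
    have hBlt : ∀ l ∈ A e, ∑ x ∈ E, (B l x).card < k := by
      intro l hl
      rw [← hk]
      refine Finset.sum_lt_sum (fun x _ => card_le_card (hBsub l x)) ⟨e, heE, ?_⟩
      simp only [B, Function.update_self]
      exact Finset.card_erase_lt_of_mem hl
    by_cases hBi : ∀ X, X ⊆ E → t * N ≤ (E \ X).card + ∑ l, r (X.filter (fun e => l ∈ B i e))
    · obtain ⟨A', h1, h2, h3⟩ := ih _ (hBlt i hi) (B i) rfl hBi
      exact ⟨A', fun x hx => (h1 x hx).trans (hBsub i x), h2, h3⟩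
    by_cases hBj : ∀ X, X ⊆ E → t * N ≤ (E \ X).card + ∑ l, r (X.filter (fun e => l ∈ B j e))
    · obtain ⟨A', h1, h2, h3⟩ := ih _ (hBlt j hj) (B j) rfl hBj
      exact ⟨A', fun x hx => (h1 x hx).trans (hBsub j x), h2, h3⟩
    exfalso
    push Not at hBi hBj
    obtain ⟨X, hXE, hX⟩ := hBi
    obtain ⟨Y, hYE, hY⟩ := hBj
    have hmem : ∀ l Z, Z ⊆ E → (E \ Z).card + ∑ m, r (Z.filter (fun e => m ∈ B l e)) < t * N →
        e ∈ Z := by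
      intro l Z hZE hZ
      by_contra heZ
      have := hA Z hZE
      have h2 : ∀ m, Z.filter (fun e => m ∈ B l e) = Z.filter (fun e => m ∈ A e) := by
        intro m
        apply Finset.filter_congr
        intro x hx
        have : x ≠ e := fun h => heZ (h ▸ hx)
        simp [B, this]
      simp only [h2] at hZ
      omega
    have heX := hmem i X hXE hX
    have heY := hmem j Y hYE hY
    have hU := hA (X ∪ Y) (union_subset hXE hYE)
    have hI := hA ((X ∩ Y).erase e) ((erase_subset _ _).trans (inter_subset_left.trans hXE))
    have key : ∑ l, r ((X ∪ Y).filter (fun e => l ∈ A e)) +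
        ∑ l, r (((X ∩ Y).erase e).filter (fun e => l ∈ A e)) ≤
        ∑ l, r (X.filter (fun e => l ∈ B i e)) + ∑ l, r (Y.filter (fun e => l ∈ B j e)) := by
      rw [← sum_add_distrib, ← sum_add_distrib]
      apply Finset.sum_le_sum
      intro l _
      refine le_trans ?_ (hsub _ _)
      apply add_le_add
      · apply hmono
        intro x hx
        simp only [mem_filter, mem_union] at hx ⊢
        by_cases hxe : x = e
        · subst hxe
          by_cases hl : l = i
          · right
            refine ⟨heY, ?_⟩
            simp only [B, Function.update_self, mem_erase]
            exact ⟨by rw [hl]; exact hij, hx.2⟩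
          · left
            refine ⟨heX, ?_⟩
            simp only [B, Function.update_self, mem_erase]
            exact ⟨hl, hx.2⟩
        · simp only [B, Function.update_of_ne hxe]
          tauto
      · apply hmono
        intro x hx
        simp only [mem_filter, mem_erase, mem_inter] at hx ⊢
        simp only [B, Function.update_of_ne hx.1.1]
        tauto
    have c1 : (E \ (X ∪ Y)).card + (E \ ((X ∩ Y).erase e)).card =
        (E \ X).card + (E \ Y).card + 1 := by
      have a1 := card_sdiff_add_card_eq_card hXE
      have a2 := card_sdiff_add_card_eq_card hYE
      have a3 := card_sdiff_add_card_eq_card (union_subset hXE hYE)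
      have a4 := card_sdiff_add_card_eq_card
        ((erase_subset e (X ∩ Y)).trans (inter_subset_left.trans hXE))
      have a5 := card_union_add_card_inter X Y
      have a6 := card_erase_add_one (mem_inter.2 ⟨heX, heY⟩)
      omega
    omega

noncomputable def evec {V : Type} (e : Sym2 V) : V → ZMod 2 :=
  Sym2.lift ⟨fun u v => Pi.single u 1 + Pi.single v 1, fun _ _ => add_comm _ _⟩ e

theorem evec_mk {V : Type} (u v : V) :
    evec s(u, v) = (Pi.single u 1 + Pi.single v 1 : V → ZMod 2) := rfl

theorem zmod2_add_self (a : ZMod 2) : a + a = 0 := CharTwo.add_self_eq_zero a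

theorem fun_zmod2_add_self {V : Type} (a : V → ZMod 2) : a + a = 0 := by
  funext v; exact zmod2_add_self _

theorem fun_zmod2_eq {V : Type} {a b : V → ZMod 2} (h : a + b = 0) : a = b := by
  have := fun_zmod2_add_self b
  calc a = a + (b + b) := by rw [this, add_zero]
    _ = (a + b) + b := by rw [add_assoc]
    _ = b := by rw [h, zero_add]

theorem evec_diag {V : Type} (e : Sym2 V) (h : e.IsDiag) : evec e = 0 := by
  induction e with
  | _ u v =>
    rw [Sym2.mk_isDiag_iff] at h
    subst h
    rw [evec_mk]; exact fun_zmod2_add_self _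

theorem evec_apply {V : Type} (e : Sym2 V) (h : ¬ e.IsDiag) (x : V) :
    evec e x = if x ∈ e then 1 else 0 := by
  induction e with
  | _ u v =>
    rw [Sym2.mk_isDiag_iff] at h
    rw [evec_mk]
    simp only [Pi.add_apply, Pi.single_apply, Sym2.mem_iff]
    by_cases h1 : x = u
    · subst h1; simp [h]
    · by_cases h2 : x = v
      · subst h2; simp [h1]
      · simp [h1, h2]

theorem evec_ne_zero {V : Type} (e : Sym2 V) (h : ¬ e.IsDiag) : evec e ≠ 0 := by
  induction e with
  | _ u v =>
    intro h0
    have := congrFun h0 u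
    rw [evec_apply _ h] at this
    simp at this

theorem evec_inj {V : Type} (e f : Sym2 V) (he : ¬ e.IsDiag) (hf : ¬ f.IsDiag)
    (h : evec e = evec f) : e = f := by
  apply Sym2.ext
  intro x
  have := congrFun h x
  rw [evec_apply _ he, evec_apply _ hf] at this
  by_cases h1 : x ∈ e <;> by_cases h2 : x ∈ f <;> simp_all

noncomputable def rk {V : Type} (X : Finset (Sym2 V)) : ℕ :=
  Module.finrank (ZMod 2) (Submodule.span (ZMod 2) (evec '' (X : Set (Sym2 V))))

section
variable {V : Type} [Fintype V]

theorem rk_mono (X Y : Finset (Sym2 V)) (h : X ⊆ Y) : rk X ≤ rk Y := by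
  apply Submodule.finrank_mono
  apply Submodule.span_mono
  exact Set.image_mono (by exact_mod_cast h)

theorem rk_sub (X Y : Finset (Sym2 V)) : rk (X ∪ Y) + rk (X ∩ Y) ≤ rk X + rk Y := by
  unfold rk
  rw [← Submodule.finrank_sup_add_finrank_inf_eq
    (Submodule.span (ZMod 2) (evec '' (X : Set (Sym2 V))))
    (Submodule.span (ZMod 2) (evec '' (Y : Set (Sym2 V))))]
  apply add_le_add
  · apply le_of_eq
    rw [Finset.coe_union, Set.image_union, Submodule.span_union]
  · apply Submodule.finrank_mono
    apply le_inf
    · apply Submodule.span_mono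
      apply Set.image_mono
      intro x hx; simp at hx; simp [hx.1]
    · apply Submodule.span_mono
      apply Set.image_mono
      intro x hx; simp at hx; simp [hx.2]

theorem rk_le_card (X : Finset (Sym2 V)) : rk X ≤ X.card := by
  have h := finrank_span_finset_le_card (R := ZMod 2) (X.image evec)
  unfold Set.finrank at h
  rw [Finset.coe_image] at h
  exact h.trans card_image_le

theorem rk_union_le (X Y : Finset (Sym2 V)) : rk (X ∪ Y) ≤ rk X + Y.card := by
  have h1 := rk_sub X Y
  have h2 := rk_le_card Y
  omega

theorem rk_one (X : Finset (Sym2 V)) (e : Sym2 V) (he : e ∈ X) (hd : ¬ e.IsDiag) : 1 ≤ rk X := by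
  unfold rk
  rw [Nat.one_le_iff_ne_zero, ← Nat.pos_iff_ne_zero, Module.finrank_pos_iff_exists_ne_zero]
  refine ⟨⟨evec e, Submodule.subset_span ⟨e, by exact_mod_cast he, rfl⟩⟩, ?_⟩
  intro h
  exact evec_ne_zero e hd (congrArg Subtype.val h)

theorem rk_two (X : Finset (Sym2 V)) (e f : Sym2 V) (he : e ∈ X) (hf : f ∈ X) (hd : ¬ e.IsDiag)
    (hd' : ¬ f.IsDiag) (hne : e ≠ f) : 2 ≤ rk X := by
  have hli : LinearIndependent (ZMod 2) ![evec e, evec f] := by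
    rw [LinearIndependent.pair_iff]
    have h1 := evec_ne_zero e hd
    have h2 := evec_ne_zero f hd'
    have h3 : evec e ≠ evec f := fun h => hne (evec_inj e f hd hd' h)
    have hz : ∀ z : ZMod 2, z = 0 ∨ z = 1 := by decide
    intro a b hab
    rcases hz a with rfl | rfl <;> rcases hz b with rfl | rfl <;> simp at hab
    · simp
    · exact absurd hab h2
    · exact absurd hab h1
    · exact absurd (fun_zmod2_eq hab) h3
  have h := finrank_span_eq_card hli
  rw [Fintype.card_fin] at h
  refine h.symm.le.trans ?_
  apply Submodule.finrank_mono
  apply Submodule.span_mono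
  rintro _ ⟨i, rfl⟩
  fin_cases i
  · exact ⟨e, by exact_mod_cast he, rfl⟩
  · exact ⟨f, by exact_mod_cast hf, rfl⟩

noncomputable def pmap {κ : Type} (p : V → κ) : (V → ZMod 2) →ₗ[ZMod 2] (κ → ZMod 2) :=
  Fintype.linearCombination (ZMod 2) (fun v => (Pi.single (p v) 1 : κ → ZMod 2))

theorem pmap_single {κ : Type} (p : V → κ) (v : V) :
    pmap p (Pi.single v 1) = Pi.single (p v) 1 := by
  unfold pmap
  rw [Fintype.linearCombination_apply_single, one_smul]

theorem pmap_evec {κ : Type} (p : V → κ) (e : Sym2 V) : pmap p (evec e) = evec (Sym2.map p e) := by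
  induction e with
  | _ u v =>
    rw [Sym2.map_mk, evec_mk, evec_mk, map_add, pmap_single, pmap_single]

theorem span_le_ker {κ : Type} (p : V → κ) (X : Finset (Sym2 V))
    (hX : ∀ e ∈ X, (Sym2.map p e).IsDiag) :
    Submodule.span (ZMod 2) (evec '' (X : Set (Sym2 V))) ≤ LinearMap.ker (pmap p) := by
  rw [Submodule.span_le]
  rintro _ ⟨e, he, rfl⟩
  rw [SetLike.mem_coe, LinearMap.mem_ker, pmap_evec]
  exact evec_diag _ (hX e (by exact_mod_cast he))

theorem rk_le_of_noncross {κ : Type} [Fintype κ] (p : V → κ) (hp : Function.Surjective p)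
    (X : Finset (Sym2 V)) (hX : ∀ e ∈ X, (Sym2.map p e).IsDiag) :
    rk X + Fintype.card κ ≤ Fintype.card V := by
  have h1 := LinearMap.finrank_range_add_finrank_ker (pmap p)
  have h2 : LinearMap.range (pmap p) = ⊤ := by
    rw [eq_top_iff, ← (Pi.basisFun (ZMod 2) κ).span_eq, Submodule.span_le]
    rintro _ ⟨k, rfl⟩
    obtain ⟨v, rfl⟩ := hp k
    exact ⟨Pi.single v 1, by rw [pmap_single]; simp⟩
  have h3 := Submodule.finrank_mono (span_le_ker p X hX)
  rw [h2, finrank_top, Module.finrank_fintype_fun_eq_card, Module.finrank_fintype_fun_eq_card] at h1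
  unfold rk
  omega

theorem rk_add_le {κ : Type} [Fintype κ] (p : V → κ)
    (X F : Finset (Sym2 V)) (hX : ∀ e ∈ X, (Sym2.map p e).IsDiag) :
    rk X + rk (F.image (Sym2.map p)) ≤ rk (X ∪ F) := by
  set W := Submodule.span (ZMod 2) (evec '' ((X ∪ F : Finset (Sym2 V)) : Set (Sym2 V))) with hW
  have h1 := LinearMap.finrank_range_add_finrank_ker ((pmap p).domRestrict W)
  have h2 : rk (F.image (Sym2.map p)) ≤
      Module.finrank (ZMod 2) (LinearMap.range ((pmap p).domRestrict W)) := by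
    apply Submodule.finrank_mono
    rw [Submodule.span_le]
    rintro _ ⟨e', he', rfl⟩
    simp only [coe_image, Set.mem_image] at he'
    obtain ⟨e, he, rfl⟩ := he'
    refine ⟨⟨evec e, Submodule.subset_span ⟨e, ?_, rfl⟩⟩, ?_⟩
    · rw [Finset.coe_union]; exact Or.inr he
    · rw [LinearMap.domRestrict_apply, pmap_evec]
  have h3 : rk X ≤ Module.finrank (ZMod 2) (LinearMap.ker ((pmap p).domRestrict W)) := by
    have hXW : Submodule.span (ZMod 2) (evec '' (X : Set (Sym2 V))) ≤ W := by
      apply Submodule.span_mono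
      apply Set.image_mono
      rw [Finset.coe_union]; exact Set.subset_union_left
    let φ : Submodule.span (ZMod 2) (evec '' (X : Set (Sym2 V))) →ₗ[ZMod 2]
        LinearMap.ker ((pmap p).domRestrict W) :=
      (Submodule.inclusion hXW).codRestrict _ (by
        intro x
        rw [LinearMap.mem_ker, LinearMap.domRestrict_apply]
        exact span_le_ker p X hX x.2)
    apply LinearMap.finrank_le_finrank_of_injective (f := φ)
    intro a b hab
    have := congrArg (fun z => ((z : LinearMap.ker ((pmap p).domRestrict W)) : W).1) hab
    exact Subtype.ext this
  have h4 : rk (X ∪ F) = Module.finrank (ZMod 2) W := rfl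
  omega

theorem rk_comp (X : Finset (Sym2 V)) :
    Fintype.card V ≤ rk X +
      Fintype.card (SimpleGraph.fromEdgeSet (X : Set (Sym2 V))).ConnectedComponent := by
  set G := SimpleGraph.fromEdgeSet (X : Set (Sym2 V)) with hG
  set S := Submodule.span (ZMod 2) (evec '' (X : Set (Sym2 V))) with hS
  let f : G.ConnectedComponent → (V → ZMod 2) := fun k => Pi.single (Quot.out k) 1
  have hreach : ∀ u v, G.Reachable u v →
      (Pi.single u 1 + Pi.single v 1 : V → ZMod 2) ∈ S := by
    intro u v h
    obtain ⟨w⟩ := h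
    induction w with
    | nil => rw [fun_zmod2_add_self]; exact S.zero_mem
    | @cons a b c hab w ih =>
      have h1 : (Pi.single a 1 + Pi.single b 1 : V → ZMod 2) ∈ S := by
        rw [hG, SimpleGraph.fromEdgeSet_adj] at hab
        exact Submodule.subset_span ⟨s(a, b), hab.1, rfl⟩
      have h2 := S.add_mem h1 ih
      have h3 : (Pi.single a 1 + Pi.single b 1 + (Pi.single b 1 + Pi.single c 1) : V → ZMod 2) =
          Pi.single a 1 + Pi.single c 1 := by
        rw [add_assoc, ← add_assoc (Pi.single b 1), fun_zmod2_add_self, zero_add]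
      rwa [h3] at h2
  have htop : S ⊔ Submodule.span (ZMod 2) (Set.range f) = ⊤ := by
    rw [eq_top_iff, ← (Pi.basisFun (ZMod 2) V).span_eq, Submodule.span_le]
    rintro _ ⟨v, rfl⟩
    rw [Pi.basisFun_apply, SetLike.mem_coe, Submodule.mem_sup]
    set u := Quot.out (G.connectedComponentMk v) with hu
    have huv : G.Reachable v u := by
      have : G.connectedComponentMk u = G.connectedComponentMk v := Quot.out_eq _
      exact (SimpleGraph.ConnectedComponent.eq.1 this).symm
    refine ⟨_, hreach v u huv, Pi.single u 1, Submodule.subset_span ⟨G.connectedComponentMk v, rfl⟩, ?_⟩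
    rw [add_assoc, fun_zmod2_add_self, add_zero]
  have h1 := Submodule.finrank_add_le_finrank_add_finrank S (Submodule.span (ZMod 2) (Set.range f))
  rw [htop, finrank_top, Module.finrank_fintype_fun_eq_card] at h1
  have h2 := finrank_range_le_card (R := ZMod 2) f
  unfold Set.finrank at h2
  have h3 : rk X = Module.finrank (ZMod 2) S := rfl
  have h5 : Fintype.card G.ConnectedComponent =
      Fintype.card (SimpleGraph.fromEdgeSet (X : Set (Sym2 V))).ConnectedComponent :=
    Fintype.card_congr (Equiv.refl _)
  rw [← h5]
  omega

theorem noncross_comp (X : Finset (Sym2 V)) (e : Sym2 V) (he : e ∈ X) :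
    (Sym2.map (SimpleGraph.fromEdgeSet (X : Set (Sym2 V))).connectedComponentMk e).IsDiag := by
  induction e with
  | _ u v =>
    rw [Sym2.map_mk, Sym2.mk_isDiag_iff]
    by_cases huv : u = v
    · rw [huv]
    · apply SimpleGraph.ConnectedComponent.sound
      apply SimpleGraph.Adj.reachable
      rw [SimpleGraph.fromEdgeSet_adj]
      exact ⟨he, huv⟩

theorem connected_of_rk [Nonempty V] (X : Finset (Sym2 V)) (h : rk X = Fintype.card V - 1) :
    (SimpleGraph.fromEdgeSet (X : Set (Sym2 V))).Connected := by
  have h1 := rk_le_of_noncross (SimpleGraph.fromEdgeSet (X : Set (Sym2 V))).connectedComponentMk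
    Quot.mk_surjective X (noncross_comp X)
  have hV : 0 < Fintype.card V := Fintype.card_pos
  have h2 : Fintype.card (SimpleGraph.fromEdgeSet (X : Set (Sym2 V))).ConnectedComponent ≤ 1 := by
    omega
  rw [Fintype.card_le_one_iff] at h2
  rw [SimpleGraph.connected_iff]
  exact ⟨fun u v => SimpleGraph.ConnectedComponent.eq.1 (h2 _ _), inferInstance⟩

theorem rk_of_connected (X : Finset (Sym2 V))
    (h : (SimpleGraph.fromEdgeSet (X : Set (Sym2 V))).Connected) :
    Fintype.card V ≤ rk X + 1 := by
  have h1 := rk_comp X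
  have h2 : Fintype.card (SimpleGraph.fromEdgeSet (X : Set (Sym2 V))).ConnectedComponent ≤ 1 := by
    rw [Fintype.card_le_one_iff]
    intro a b
    induction a using SimpleGraph.ConnectedComponent.ind
    induction b using SimpleGraph.ConnectedComponent.ind
    exact SimpleGraph.ConnectedComponent.eq.2 (h.preconnected _ _)
  omega
end

/-- number of bins containing two parallel crossing edges -/
noncomputable def DD {V κ : Type} {t : ℕ} (R : Finset (Sym2 V)) (β : Sym2 V → Fin t)
    (p : V → κ) : ℕ :=
  (univ.filter (fun i : Fin t => ∃ e ∈ R, ∃ f ∈ R, e ≠ f ∧ β e = i ∧ β f = i ∧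
    ¬ (Sym2.map p e).IsDiag ∧ Sym2.map p e = Sym2.map p f)).card

/-- crossing edges -/
noncomputable def crs {V κ : Type} (H : Finset (Sym2 V)) (p : V → κ) : Finset (Sym2 V) :=
  H.filter (fun e => ¬ (Sym2.map p e).IsDiag)

theorem thmA {V : Type} [Fintype V] [Nonempty V] (c : Sym2 V → ℕ) (t : ℕ)
    (H R : Finset (Sym2 V)) (β : Sym2 V → Fin t) (hH : ∀ e ∈ H, ¬ e.IsDiag) (hRH : R ⊆ H)
    (h1 : ∀ e ∈ H, e ∉ R → ∀ f ∈ H, c e = c f → e = f)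
    (h2 : ∀ e ∈ R, ∀ f ∈ R, β e = β f → c e = c f → e = f)
    (h3 : ∀ i, (R.filter (fun e => β e = i)).card ≤ 2)
    (h4 : ∀ (κ : Type) [Fintype κ] (p : V → κ), Function.Surjective p →
      t * (Fintype.card κ - 1) + DD R β p ≤ (crs H p).card) :
    HasRainbowSpanningTrees (⊤ : SimpleGraph V) c t := by
  have hV : 0 < Fintype.card V := Fintype.card_pos
  have hle : ∀ X : Finset (Sym2 V), rk X ≤ Fintype.card V - 1 := by
    intro X
    have := rk_le_of_noncross (κ := Unit) (fun _ : V => ()) (fun _ => ⟨Classical.arbitrary V, rfl⟩)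
      X (by intro e _; induction e with | _ u v => simp)
    simp at this
    omega
  have hcond : ∀ X, X ⊆ H → t * (Fintype.card V - 1) ≤ (H \ X).card +
      ∑ i, rk (X.filter (fun e => i ∈ (if e ∈ R then {β e} else univ : Finset (Fin t)))) := by
    intro X hXH
    set Y := X \ R with hY
    let p := (SimpleGraph.fromEdgeSet (Y : Set (Sym2 V))).connectedComponentMk
    have hps : Function.Surjective p := Quot.mk_surjective
    have hnc : ∀ e ∈ Y, (Sym2.map p e).IsDiag := noncross_comp Y
    have hrkY := rk_comp Y
    set s := Fintype.card (SimpleGraph.fromEdgeSet (Y : Set (Sym2 V))).ConnectedComponent with hs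
    have hsn : s ≤ Fintype.card V := Fintype.card_le_of_surjective p hps
    have hs1 : 1 ≤ s := Fintype.card_pos_iff.2 ⟨p (Classical.arbitrary V)⟩
    have hp4 : t * (s - 1) + DD R β p ≤ (crs H p).card := h4 _ p hps
    let F : Fin t → Finset (Sym2 V) := fun i => R.filter (fun e => β e = i)
    let bad : Fin t → Prop := fun i => ∃ e ∈ R, ∃ f ∈ R, e ≠ f ∧ β e = i ∧ β f = i ∧
        ¬ (Sym2.map p e).IsDiag ∧ Sym2.map p e = Sym2.map p f
    have hcr : ∀ i, (crs (F i) p).card ≤ rk ((F i).image (Sym2.map p)) +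
        (if bad i then 1 else 0) := by
      intro i
      have hsub : crs (F i) p ⊆ F i := filter_subset _ _
      have hc2 : (crs (F i) p).card ≤ 2 := (card_le_card hsub).trans (h3 i)
      have hmem : ∀ e ∈ crs (F i) p, e ∈ R ∧ β e = i ∧ ¬ (Sym2.map p e).IsDiag ∧
          Sym2.map p e ∈ (F i).image (Sym2.map p) := by
        intro e he
        have h5 := hsub he
        have h6 := (mem_filter.1 h5)
        exact ⟨h6.1, h6.2, (mem_filter.1 he).2, mem_image_of_mem _ h5⟩
      rcases Nat.lt_or_ge (crs (F i) p).card 2 with hlt | hge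
      · rcases Nat.eq_zero_or_pos (crs (F i) p).card with h0 | hpos
        · rw [h0]; exact Nat.zero_le _
        · obtain ⟨e, he⟩ := card_pos.1 hpos
          have := rk_one _ _ (hmem e he).2.2.2 (hmem e he).2.2.1
          omega
      · obtain ⟨e, f, hef, heq⟩ := card_eq_two.1 (le_antisymm hc2 hge)
        have he := hmem e (by rw [heq]; simp)
        have hf := hmem f (by rw [heq]; simp)
        by_cases hm : Sym2.map p e = Sym2.map p f
        · have hb : bad i := ⟨e, he.1, f, hf.1, hef, he.2.1, hf.2.1, he.2.2.1, hm⟩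
          have := rk_one _ _ he.2.2.2 he.2.2.1
          rw [if_pos hb]
          omega
        · have := rk_two _ _ _ he.2.2.2 hf.2.2.2 he.2.2.1 hf.2.2.1 hm
          omega
    have hi : ∀ i, (Fintype.card V - s) + (crs (F i) p).card ≤ (F i \ X).card +
        rk (X.filter (fun e => i ∈ (if e ∈ R then {β e} else univ : Finset (Fin t)))) +
        (if bad i then 1 else 0) := by
      intro i
      have e1 : X.filter (fun e => i ∈ (if e ∈ R then {β e} else univ : Finset (Fin t))) =
          Y ∪ (F i ∩ X) := by
        ext e
        simp only [mem_filter, hY, mem_union, mem_sdiff, mem_inter, F]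
        by_cases her : e ∈ R
        · simp [her]; constructor
          · rintro ⟨a, b⟩; exact ⟨b.symm, a⟩
          · rintro ⟨a, b⟩; exact ⟨b, a.symm⟩
        · simp [her]
      have e2 : Y ∪ F i = (Y ∪ (F i ∩ X)) ∪ (F i \ X) := by
        ext e
        simp only [mem_union, mem_inter, mem_sdiff]
        tauto
      have e3 := rk_union_le (Y ∪ (F i ∩ X)) (F i \ X)
      have e4 := rk_add_le p Y (F i) hnc
      rw [e2] at e4
      rw [e1]
      have := hcr i
      omega
    have hsum := Finset.sum_le_sum (fun i (_ : i ∈ (univ : Finset (Fin t))) => hi i)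
    simp only [sum_add_distrib] at hsum
    have s1 : ∑ i : Fin t, (Fintype.card V - s) = t * (Fintype.card V - s) := by simp
    have s2 : ∑ i, (crs (F i) p).card = (crs R p).card := by
      rw [card_eq_sum_card_fiberwise (f := β) (t := univ) (fun _ _ => by simp)]
      apply sum_congr rfl
      intro i _
      congr 1
      ext e
      simp only [crs, F, mem_filter]
      tauto
    have s3 : ∑ i, (F i \ X).card = (R \ X).card := by
      rw [card_eq_sum_card_fiberwise (f := β) (s := R \ X) (t := univ) (fun _ _ => by simp)]
      apply sum_congr rfl
      intro i _
      congr 1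
      ext e
      simp only [F, mem_filter, mem_sdiff]
      tauto
    have s4 : ∑ i, (if bad i then 1 else 0) = DD R β p := by
      unfold DD
      rw [card_filter]
    rw [s1, s2, s3, s4] at hsum
    have c1 : (H \ X).card = ((H \ R) \ X).card + (R \ X).card := by
      rw [← card_union_of_disjoint]
      · congr 1
        ext e
        simp only [mem_union, mem_sdiff]
        have := @hRH e
        tauto
      · rw [Finset.disjoint_left]
        intro e he he'
        simp only [mem_sdiff] at he he'
        tauto
    have c2 : (crs H p).card ≤ ((H \ R) \ X).card + (crs R p).card := by
      refine le_trans (card_le_card ?_) (card_union_le _ _)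
      intro e he
      simp only [crs, mem_filter, mem_union, mem_sdiff] at he ⊢
      by_cases heR : e ∈ R
      · right; exact ⟨heR, he.2⟩
      · left
        refine ⟨⟨he.1, heR⟩, fun heX => he.2 (hnc e ?_)⟩
        rw [hY, mem_sdiff]; exact ⟨heX, heR⟩
    have m1 : t * (Fintype.card V - 1) = t * (Fintype.card V - s) + t * (s - 1) := by
      rw [← mul_add]; congr 1; omega
    omega
  obtain ⟨A', ha1, ha2, ha3⟩ := mu_union H rk rk_mono rk_sub hle _
    (fun e => (if e ∈ R then {β e} else univ : Finset (Fin t))) rfl hcond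
  let T : Fin t → Finset (Sym2 V) := fun i => H.filter (fun e => i ∈ A' e)
  have hT : ∀ i, ∃ S ≤ SimpleGraph.fromEdgeSet ((T i : Finset (Sym2 V)) : Set (Sym2 V)), S.IsTree :=
    fun i => (connected_of_rk (T i) (ha3 i)).exists_isTree_le
  choose S hS hSt using hT
  have hmem : ∀ i e, e ∈ (S i).edgeSet → e ∈ H ∧ i ∈ A' e := by
    intro i e he
    have := SimpleGraph.edgeSet_mono (hS i) he
    rw [SimpleGraph.edgeSet_fromEdgeSet] at this
    have h5 : e ∈ T i := by exact_mod_cast this.1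
    exact mem_filter.1 h5
  refine ⟨S, fun i => le_top, hSt, ?_, ?_⟩
  · intro i e he f hf hef
    have he' := hmem i e he
    have hf' := hmem i f hf
    by_cases heR : e ∈ R
    · by_cases hfR : f ∈ R
      · apply h2 e heR f hfR _ hef
        have b1 := ha1 e he'.1 he'.2
        have b2 := ha1 f hf'.1 hf'.2
        simp only [heR, hfR, if_true, mem_singleton] at b1 b2
        rw [← b1, ← b2]
      · exact (h1 f hf'.1 hfR e he'.1 hef.symm).symm
    · exact h1 e he'.1 heR f hf'.1 hef
  · intro i j hij
    rw [Set.disjoint_left]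
    intro e he hf
    have he' := hmem i e he
    have hf' := hmem j e hf
    exact hij (Finset.card_le_one.1 (ha2 e he'.1) i he'.2 j hf'.2)


/-- all edges of the complete graph -/
noncomputable def EE (V : Type) [Fintype V] : Finset (Sym2 V) := univ.filter (fun e => ¬ e.IsDiag)

theorem mem_EE {V : Type} [Fintype V] (e : Sym2 V) : e ∈ EE V ↔ ¬ e.IsDiag := by
  simp [EE]

theorem top_edge {V : Type} [Fintype V] {_ : Fintype (⊤ : SimpleGraph V).edgeSet} :
    (⊤ : SimpleGraph V).edgeFinset = EE V := by
  ext e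
  rw [mem_EE, SimpleGraph.mem_edgeFinset]
  induction e with | _ u v => simp

theorem card_EE (V : Type) [Fintype V] : (EE V).card = (Fintype.card V).choose 2 := by
  rw [← SimpleGraph.card_edgeFinset_top_eq_card_choose_two, top_edge]

theorem le_antiRamsey {V : Type} [Fintype V] (t m : ℕ) (c : Sym2 V → ℕ)
    (h : ((EE V).image c).card = m) (h2 : ¬ HasRainbowSpanningTrees (⊤ : SimpleGraph V) c t) :
    m ≤ antiRamsey (⊤ : SimpleGraph V) t := by
  apply le_csSup
  · refine ⟨(EE V).card, ?_⟩
    rintro m ⟨c, rfl, _⟩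
    rw [top_edge]
    exact card_image_le
  · refine ⟨c, ?_, h2⟩
    rw [top_edge, ← h]

theorem antiRamsey_le {V : Type} [Fintype V] (t m : ℕ)
    (h : ∀ c : Sym2 V → ℕ, m < ((EE V).image c).card →
      HasRainbowSpanningTrees (⊤ : SimpleGraph V) c t) :
    antiRamsey (⊤ : SimpleGraph V) t ≤ m := by
  apply csSup_le'
  rintro k ⟨c, rfl, hc⟩
  by_contra hlt
  rw [top_edge] at hlt
  exact hc (h c (not_le.1 hlt))

theorem tree_crossing {V κ : Type} [Fintype V] [Fintype κ] (p : V → κ)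
    (hp : Function.Surjective p) (T : SimpleGraph V) (hT : T.Connected) :
    Fintype.card κ ≤ (crs T.edgeFinset p).card + 1 := by
  have h1 : Fintype.card V ≤ rk T.edgeFinset + 1 := by
    apply rk_of_connected
    rw [SimpleGraph.coe_edgeFinset, SimpleGraph.fromEdgeSet_edgeSet]
    exact hT
  have h2 := rk_le_of_noncross p hp (T.edgeFinset.filter (fun e => (Sym2.map p e).IsDiag))
    (by intro e he; exact (mem_filter.1 he).2)
  have h3 := rk_union_le (T.edgeFinset.filter (fun e => (Sym2.map p e).IsDiag)) (crs T.edgeFinset p)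
  have h4 : T.edgeFinset.filter (fun e => (Sym2.map p e).IsDiag) ∪ crs T.edgeFinset p
      = T.edgeFinset := filter_union_filter_not_eq _ _
  rw [h4] at h3
  omega

theorem no_trees {V κ : Type} [Fintype V] [Fintype κ] (p : V → κ)
    (hp : Function.Surjective p) (c : Sym2 V → ℕ) (t : ℕ) (Z : Finset (Sym2 V)) (c0 : ℕ)
    (hc : ∀ e, e ∉ Z → c e = c0) (hZ : (crs Z p).card < t * (Fintype.card κ - 2)) :
    ¬ HasRainbowSpanningTrees (⊤ : SimpleGraph V) c t := by
  rintro ⟨T, _, hT, hR, hD⟩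
  have h1 : ∀ i, Fintype.card κ - 2 ≤ (crs ((T i).edgeFinset ∩ Z) p).card := by
    intro i
    have h2 := tree_crossing p hp (T i) (hT i).connected
    have h3 : ((T i).edgeFinset \ Z).card ≤ 1 := by
      rw [card_le_one]
      intro a ha b hb
      rw [mem_sdiff, SimpleGraph.mem_edgeFinset] at ha hb
      exact hR i ha.1 hb.1 ((hc a ha.2).trans (hc b hb.2).symm)
    have h4 : crs (T i).edgeFinset p ⊆ crs ((T i).edgeFinset ∩ Z) p ∪ ((T i).edgeFinset \ Z) := by
      intro e he
      simp only [crs, mem_filter, mem_union, mem_inter, mem_sdiff] at he ⊢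
      tauto
    have h5 := (card_le_card h4).trans (card_union_le _ _)
    omega
  have h2 : (univ.biUnion (fun i => crs ((T i).edgeFinset ∩ Z) p)) ⊆ crs Z p := by
    intro e he
    simp only [crs, mem_filter, mem_biUnion, mem_inter] at he ⊢
    tauto
  have h3 := card_le_card h2
  rw [card_biUnion] at h3
  · have h4 := sum_le_sum (fun i (_ : i ∈ (univ : Finset (Fin t))) => h1 i)
    simp at h4
    omega
  · intro i _ j _ hij
    refine Finset.disjoint_left.2 ?_
    intro e he he'
    simp only [crs, mem_filter, mem_inter, SimpleGraph.mem_edgeFinset] at he he'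
    exact Set.disjoint_left.1 (hD i j hij) he.1.1 he'.1.1

theorem lower_gen {V κ : Type} [Fintype V] [Fintype κ] (p : V → κ)
    (hp : Function.Surjective p) (t : ℕ) (Z : Finset (Sym2 V))
    (hZE : Z ⊂ (EE V)) (hZ : (crs Z p).card < t * (Fintype.card κ - 2)) :
    Z.card + 1 ≤ antiRamsey (⊤ : SimpleGraph V) t := by
  let ι := Fintype.equivFin (Sym2 V)
  let c : Sym2 V → ℕ := fun e => if e ∈ Z then (ι e : ℕ) + 1 else 0
  refine le_antiRamsey _ _ c ?_ (no_trees p hp c t Z 0 (fun e he => if_neg he) hZ)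
  have hs := hZE.1
  obtain ⟨f, hf, hfZ⟩ := Finset.exists_of_ssubset hZE
  have : (EE V).image c = insert 0 (Z.image (fun e => (ι e : ℕ) + 1)) := by
    ext k
    simp only [mem_image, mem_insert]
    constructor
    · rintro ⟨e, he, rfl⟩
      by_cases h : e ∈ Z
      · right; exact ⟨e, h, by simp [c, h]⟩
      · left; simp [c, h]
    · rintro (rfl | ⟨e, he, rfl⟩)
      · exact ⟨f, hf, by simp [c, hfZ]⟩
      · exact ⟨e, hs he, by simp [c, he]⟩
  rw [this, card_insert_of_notMem (by simp), card_image_of_injective]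
  intro a b h
  simp only [Nat.add_right_cancel_iff] at h
  exact ι.injective (Fin.ext h)

theorem lower_all {V : Type} [Fintype V] (t : ℕ)
    (h : (EE V).card < t * (Fintype.card V - 1)) :
    (EE V).card ≤ antiRamsey (⊤ : SimpleGraph V) t := by
  let ι := Fintype.equivFin (Sym2 V)
  refine le_antiRamsey _ _ (fun e => (ι e : ℕ)) ?_ ?_
  · rw [card_image_of_injective]
    intro a b h
    exact ι.injective (Fin.ext h)
  · rintro ⟨T, hle, hT, hR, hD⟩
    have h2 : (univ.biUnion (fun i => (T i).edgeFinset)) ⊆ (EE V) := by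
      intro e he
      simp only [mem_biUnion, SimpleGraph.mem_edgeFinset] at he
      obtain ⟨i, _, he⟩ := he
      rw [mem_EE]
      exact (T i).not_isDiag_of_mem_edgeSet he
    have h3 := card_le_card h2
    rw [card_biUnion] at h3
    · have h4 : ∀ i, (T i).edgeFinset.card = Fintype.card V - 1 := by
        intro i
        have := (hT i).card_edgeFinset
        omega
      simp only [h4] at h3
      simp only [sum_const, card_univ, Fintype.card_fin, smul_eq_mul] at h3
      omega
    · intro i _ j _ hij
      refine Finset.disjoint_left.2 ?_
      intro e he he'
      rw [SimpleGraph.mem_edgeFinset] at he he'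
      exact Set.disjoint_left.1 (hD i j hij) he he'



/-- edges inside a vertex set -/
noncomputable def EW {V : Type} [Fintype V] (S : Finset V) : Finset (Sym2 V) :=
  (EE V).filter (fun e => ∀ v ∈ e, v ∈ S)

theorem card_EW {V : Type} [Fintype V] (S : Finset V) : (EW S).card = S.card.choose 2 := by
  rw [← Sym2.card_image_offDiag]
  congr 1
  ext e
  induction e with | _ u v =>
  simp only [EW, mem_filter, mem_EE, Sym2.mk_isDiag_iff, Sym2.mem_iff, mem_image, mem_offDiag,
    Prod.exists, Function.uncurry]
  constructor
  · rintro ⟨h1, h2⟩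
    exact ⟨u, v, ⟨h2 u (Or.inl rfl), h2 v (Or.inr rfl), h1⟩, rfl⟩
  · rintro ⟨a, b, ⟨h1, h2, h3⟩, h4⟩
    rcases Sym2.eq_iff.1 h4 with ⟨rfl, rfl⟩ | ⟨rfl, rfl⟩
    · refine ⟨h3, ?_⟩
      rintro x (rfl | rfl) <;> assumption
    · refine ⟨fun h => h3 h.symm, ?_⟩
      rintro x (rfl | rfl) <;> assumption

theorem mem_crs {V κ : Type} (H : Finset (Sym2 V)) (p : V → κ) (e : Sym2 V) :
    e ∈ crs H p ↔ e ∈ H ∧ ¬ (Sym2.map p e).IsDiag := by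
  simp [crs]

theorem crs_sub {V κ : Type} (H : Finset (Sym2 V)) (p : V → κ) : crs H p ⊆ H := filter_subset _ _

/-- non-crossing edges -/
noncomputable def ncs {V κ : Type} (H : Finset (Sym2 V)) (p : V → κ) : Finset (Sym2 V) :=
  H.filter (fun e => (Sym2.map p e).IsDiag)

theorem mem_ncs {V κ : Type} (H : Finset (Sym2 V)) (p : V → κ) (e : Sym2 V) :
    e ∈ ncs H p ↔ e ∈ H ∧ (Sym2.map p e).IsDiag := by
  simp [ncs]

theorem ncs_sub {V κ : Type} (H : Finset (Sym2 V)) (p : V → κ) : ncs H p ⊆ H := filter_subset _ _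

theorem ncs_add_crs {V κ : Type} (H : Finset (Sym2 V)) (p : V → κ) :
    (ncs H p).card + (crs H p).card = H.card := card_filter_add_card_filter_not _

theorem lower_id (n t : ℕ) (h0 : 0 < t * (n - 2)) (h1 : t * (n - 2) ≤ n.choose 2) :
    t * (n - 2) ≤ antiRamsey (⊤ : SimpleGraph (Fin n)) t := by
  have hE : (EE (Fin n)).card = n.choose 2 := by rw [card_EE, Fintype.card_fin]
  obtain ⟨Z, hZ, hc⟩ := Finset.exists_subset_card_eq (s := EE (Fin n)) (n := t * (n - 2) - 1)
    (by rw [hE]; omega)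
  have := lower_gen (id : Fin n → Fin n) Function.surjective_id t Z
    (by
      refine Finset.ssubset_iff_subset_ne.2 ⟨hZ, ?_⟩
      rintro rfl
      omega)
    (by
      have : (crs Z (id : Fin n → Fin n)).card ≤ Z.card := card_le_card (crs_sub _ _)
      rw [Fintype.card_fin]
      omega)
  omega

theorem choose_two_succ (m : ℕ) : (m + 1).choose 2 = m.choose 2 + m := by
  rw [Nat.choose_succ_succ' m 1]; simp; omega

theorem choose_two_dbl (n : ℕ) : 2 * n.choose 2 + n = n * n := by
  induction n with
  | zero => simp
  | succ m ih => rw [choose_two_succ]; nlinarith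

theorem lower_big (n t : ℕ) (ht : 0 < t) (h : 2 * t + 2 ≤ n) :
    (n - 2).choose 2 + t ≤ antiRamsey (⊤ : SimpleGraph (Fin n)) t := by
  have hE : (EE (Fin n)).card = n.choose 2 := by rw [card_EE, Fintype.card_fin]
  let a : Fin n := ⟨0, by omega⟩
  let b : Fin n := ⟨1, by omega⟩
  let d : Fin n := ⟨2, by omega⟩
  have hab : a ≠ b := by simp [a, b]
  have hda : d ≠ a := by simp [a, d]
  have hdb : d ≠ b := by simp [b, d]
  let p : Fin n → Fin 3 := fun x => if x = a then 0 else if x = b then 1 else 2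
  have hp : Function.Surjective p := by
    intro k
    fin_cases k
    · exact ⟨a, by simp [p]⟩
    · exact ⟨b, by simp [p, hab.symm]⟩
    · exact ⟨d, by simp [p, hda, hdb]⟩
  let NC := ncs (EE (Fin n)) p
  have hNC : NC = EW (univ \ {a, b}) := by
    ext e
    induction e with | _ u v =>
    simp only [NC, EW, mem_ncs, mem_filter, mem_EE, Sym2.mk_isDiag_iff, Sym2.map_mk, Sym2.mem_iff,
      mem_sdiff, mem_univ, mem_insert, mem_singleton, true_and, forall_eq_or_imp, forall_eq, p]
    refine and_congr_right fun huv => ?_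
    by_cases h1 : u = a <;> by_cases h2 : u = b <;> by_cases h3 : v = a <;> by_cases h4 : v = b <;>
      simp_all
  have hNCc : NC.card = (n - 2).choose 2 := by
    rw [hNC, card_EW, card_sdiff_of_subset (subset_univ _), card_univ, Fintype.card_fin,
      card_pair hab]
  have hsum : NC.card + (crs (EE (Fin n)) p).card = (EE (Fin n)).card :=
    ncs_add_crs _ _
  have e1 : n.choose 2 = (n - 2).choose 2 + (n - 2) + (n - 2 + 1) := by
    obtain ⟨m, rfl⟩ : ∃ m, n = m + 2 := ⟨n - 2, by omega⟩
    rw [choose_two_succ, choose_two_succ]; simp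
  obtain ⟨Y, hY, hc⟩ := Finset.exists_subset_card_eq (s := crs (EE (Fin n)) p) (n := t - 1)
    (by omega)
  have hYE : Y ⊆ EE (Fin n) := hY.trans (crs_sub _ _)
  have hdis : Disjoint NC Y := by
    refine Finset.disjoint_left.2 ?_
    intro e h1 h2
    exact ((mem_crs _ _ _).1 (hY h2)).2 ((mem_ncs _ _ _).1 h1).2
  have hcard : (NC ∪ Y).card = (n - 2).choose 2 + (t - 1) := by
    rw [card_union_of_disjoint hdis, hNCc, hc]
  have := lower_gen p hp t (NC ∪ Y)
    (by
      refine Finset.ssubset_iff_subset_ne.2 ⟨union_subset (ncs_sub _ _) hYE, ?_⟩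
      intro h
      rw [h] at hcard
      omega)
    (by
      have h1 : crs (NC ∪ Y) p ⊆ Y := by
        intro e he
        simp only [mem_crs, mem_ncs, mem_union, NC] at he
        tauto
      have := card_le_card h1
      simp
      omega)
  omega

theorem lower_odd (n t : ℕ) (ht : 0 < t) (h : n = 2 * t + 1) :
    (n - 1).choose 2 ≤ antiRamsey (⊤ : SimpleGraph (Fin n)) t := by
  have h1 := choose_two_dbl n
  have h2 := choose_two_dbl (n - 1)
  have e : t * (n - 2) = (n - 1).choose 2 := by
    subst h
    obtain ⟨s, rfl⟩ : ∃ s, t = s + 1 := ⟨t - 1, by omega⟩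
    have e1 : 2 * (s + 1) + 1 - 2 = 2 * s + 1 := by omega
    have e2 : 2 * (s + 1) + 1 - 1 = 2 * s + 2 := by omega
    rw [e2] at h2 ⊢
    rw [e1]; nlinarith
  have e3 : t * (n - 2) ≤ n.choose 2 := by
    rw [e]; exact Nat.choose_le_choose 2 (by omega)
  rw [← e]
  exact lower_id n t (Nat.mul_pos ht (by omega)) e3

theorem lower_even (n t : ℕ) (ht : 0 < t) (h : n = 2 * t) :
    n.choose 2 - t ≤ antiRamsey (⊤ : SimpleGraph (Fin n)) t := by
  have h1 := choose_two_dbl n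
  have e : t * (n - 2) + t = n.choose 2 := by
    subst h
    obtain ⟨s, rfl⟩ : ∃ s, t = s + 1 := ⟨t - 1, by omega⟩
    have e1 : 2 * (s + 1) - 2 = 2 * s := by omega
    rw [e1]; nlinarith
  rcases Nat.eq_zero_or_pos (t * (n - 2)) with h0 | h0
  · omega
  · have := lower_id n t h0 (by omega)
    omega

theorem small_case (n t : ℕ) (h : n < 2 * t) :
    antiRamsey (⊤ : SimpleGraph (Fin n)) t = n.choose 2 := by
  have hE : (EE (Fin n)).card = n.choose 2 := by rw [card_EE, Fintype.card_fin]
  apply le_antisymm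
  · apply antiRamsey_le
    intro c hc
    have := card_image_le (s := EE (Fin n)) (f := c)
    omega
  · by_cases h1 : n ≤ 1
    · rw [Nat.choose_eq_zero_of_lt (by omega)]; omega
    · rw [← hE]
      apply lower_all
      rw [hE, Fintype.card_fin]
      have h1 := choose_two_dbl n
      obtain ⟨s, rfl⟩ : ∃ s, n = s + 2 := ⟨n - 2, by omega⟩
      have e1 : s + 2 - 1 = s + 1 := by omega
      rw [e1]
      nlinarith



theorem arr_step {Ω : Type} {t : ℕ} (σ : Fin t × Bool ≃ Ω) (i j : Fin t) (hij : i ≠ j) (b : Bool) :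
    ∃ σ' : Fin t × Bool ≃ Ω, σ' (i, false) = σ (i, false) ∧ σ' (i, true) = σ (j, b) ∧
      σ' (j, b) = σ (i, true) ∧ σ' (j, !b) = σ (j, !b) ∧
      ∀ k, k ≠ i → k ≠ j → ∀ d, σ' (k, d) = σ (k, d) := by
  refine ⟨(Equiv.swap (i, true) (j, b)).trans σ, ?_, ?_, ?_, ?_, ?_⟩
  · simp only [Equiv.trans_apply]
    rw [Equiv.swap_apply_of_ne_of_ne] <;> simp [hij]
  · simp
  · simp
  · simp only [Equiv.trans_apply]
    rw [Equiv.swap_apply_of_ne_of_ne] <;> simp [hij.symm]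
  · intro k h1 h2 d
    simp only [Equiv.trans_apply]
    rw [Equiv.swap_apply_of_ne_of_ne] <;> simp [h1, h2]

theorem arr_rainbow {Ω : Type} [Fintype Ω] {t : ℕ} (σ0 : Fin t × Bool ≃ Ω) (c : Ω → ℕ)
    (hc : ∀ k, (univ.filter (fun x => c x = k)).card ≤ t) :
    ∃ σ : Fin t × Bool ≃ Ω, ∀ i, c (σ (i, false)) ≠ c (σ (i, true)) := by
  let bad : (Fin t × Bool ≃ Ω) → Finset (Fin t) := fun σ =>
    univ.filter (fun i => c (σ (i, false)) = c (σ (i, true)))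
  have hne : (univ : Finset (Fin t × Bool ≃ Ω)).Nonempty := ⟨σ0, mem_univ _⟩
  obtain ⟨σ, _, hmin⟩ := exists_min_image univ (fun σ => (bad σ).card) hne
  refine ⟨σ, ?_⟩
  by_contra hcon
  push Not at hcon
  obtain ⟨i, hi⟩ := hcon
  have hj : ∃ j, ∀ d, c (σ (j, d)) ≠ c (σ (i, true)) := by
    by_contra hcon
    push Not at hcon
    choose d hd using hcon
    let g : Option (Fin t) → Fin t × Bool := fun o => match o with
      | none => (i, true)
      | some j => if j = i then (i, false) else (j, d j)
    have hg : Function.Injective g := by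
      intro a b hab
      rcases a with _ | a <;> rcases b with _ | b
      · rfl
      · by_cases h : b = i
        · simp [g, h] at hab
        · simp [g, h] at hab; exact absurd hab.1.symm h
      · by_cases h : a = i
        · simp [g, h] at hab
        · simp [g, h] at hab
      · by_cases h : a = i <;> by_cases h' : b = i
        · rw [h, h']
        · simp [g, h, h'] at hab; exact absurd hab.1.symm h'
        · simp [g, h, h'] at hab
        · simp [g, h, h'] at hab; rw [hab.1]
    have h1 : (univ.image (fun o => σ (g o))) ⊆ univ.filter (fun x => c x = c (σ (i, true))) := by
      intro x hx
      simp only [mem_image, mem_univ, true_and, mem_filter] at hx ⊢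
      obtain ⟨o, rfl⟩ := hx
      rcases o with _ | a
      · rfl
      · by_cases h : a = i
        · simp only [g, h, if_true]; exact hi
        · simp only [g, h, if_false]; exact hd a
    have h2 := card_le_card h1
    rw [card_image_of_injective _ (show Function.Injective (fun o => σ (g o)) from σ.injective.comp hg), card_univ, Fintype.card_option,
      Fintype.card_fin] at h2
    have := hc (c (σ (i, true)))
    omega
  obtain ⟨j, hj⟩ := hj
  have hij : i ≠ j := by rintro rfl; exact hj true rfl
  obtain ⟨σ', h1, h2, h3, h4, h5⟩ := arr_step σ i j hij false
  have hlt : (bad σ').card < (bad σ).card := by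
    apply card_lt_card
    refine Finset.ssubset_iff_of_subset ?_ |>.2 ⟨i, ?_, ?_⟩
    · intro k hk
      simp only [bad, mem_filter, mem_univ, true_and] at hk ⊢
      by_cases hki : k = i
      · subst hki; exact hi
      by_cases hkj : k = j
      · subst hkj
        rw [h3] at hk
        simp only [Bool.not_false] at h4
        rw [h4] at hk
        exact absurd hk.symm (hj true)
      · rwa [h5 k hki hkj, h5 k hki hkj] at hk
    · simp only [bad, mem_filter, mem_univ, true_and]; exact hi
    · simp only [bad, mem_filter, mem_univ, true_and]
      rw [h1, h2, hi]
      exact (hj false).symm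
  exact absurd (hmin σ' (mem_univ _)) (not_le.2 hlt)

theorem arr_label {Ω : Type} [Fintype Ω] {t : ℕ} (σ0 : Fin t × Bool ≃ Ω) (c : Ω → ℕ)
    (hc : ∀ k, (univ.filter (fun x => c x = k)).card ≤ t) (l : Ω → Option Bool) :
    ∃ σ : Fin t × Bool ≃ Ω, (∀ i, c (σ (i, false)) ≠ c (σ (i, true))) ∧
      ∀ x : Option Bool, x ≠ none → (∀ i, ¬ (l (σ (i, false)) = x ∧ l (σ (i, true)) = x)) ∨
        (∀ i, l (σ (i, false)) = x ∨ l (σ (i, true)) = x) := by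
  obtain ⟨σ1, hσ1⟩ := arr_rainbow σ0 c hc
  let bad : (Fin t × Bool ≃ Ω) → Finset (Fin t) := fun σ =>
    univ.filter (fun i => l (σ (i, false)) ≠ none ∧ l (σ (i, false)) = l (σ (i, true)))
  have hne : (univ.filter (fun σ : Fin t × Bool ≃ Ω =>
      ∀ i, c (σ (i, false)) ≠ c (σ (i, true)))).Nonempty := ⟨σ1, by simpa using hσ1⟩
  obtain ⟨σ, hσ, hmin⟩ := exists_min_image _ (fun σ => (bad σ).card) hne
  simp only [mem_filter, mem_univ, true_and] at hσ hmin
  refine ⟨σ, hσ, ?_⟩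
  intro x hx
  by_contra hcon
  push Not at hcon
  obtain ⟨⟨i, hi1, hi2⟩, ⟨j, hj1, hj2⟩⟩ := hcon
  have hij : i ≠ j := by rintro rfl; exact hj1 hi1
  have hci := hσ i
  have hcj := hσ j
  have hopt : ∃ b, c (σ (i, false)) ≠ c (σ (j, b)) ∧ c (σ (i, true)) ≠ c (σ (j, !b)) := by
    by_contra hcon
    push Not at hcon
    have h1 := hcon false
    have h2 := hcon true
    simp only [Bool.not_false, Bool.not_true] at h1 h2
    grind
  obtain ⟨b, hb1, hb2⟩ := hopt
  obtain ⟨σ', h1, h2, h3, h4, h5⟩ := arr_step σ i j hij b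
  have hσ' : ∀ k, c (σ' (k, false)) ≠ c (σ' (k, true)) := by
    intro k
    by_cases hki : k = i
    · subst hki; rw [h1, h2]; exact hb1
    by_cases hkj : k = j
    · subst hkj
      cases b
      · simp only [Bool.not_false] at h4 hb2; rw [h3, h4]; exact hb2
      · simp only [Bool.not_true] at h4 hb2; rw [h3, h4]; exact hb2.symm
    · rw [h5 k hki hkj, h5 k hki hkj]; exact hσ k
  have hlj : ∀ d, l (σ (j, d)) ≠ x := by intro d; cases d <;> assumption
  have hlt : (bad σ').card < (bad σ).card := by
    apply card_lt_card
    refine Finset.ssubset_iff_of_subset ?_ |>.2 ⟨i, ?_, ?_⟩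
    · intro k hk
      simp only [bad, mem_filter, mem_univ, true_and] at hk ⊢
      by_cases hki : k = i
      · subst hki; rw [hi1, hi2]; exact ⟨hx, rfl⟩
      by_cases hkj : k = j
      · subst hkj
        exfalso
        cases b
        · simp only [Bool.not_false] at h4
          rw [h3, h4, hi2] at hk
          exact hlj _ hk.2.symm
        · simp only [Bool.not_true] at h4
          rw [h3, h4, hi2] at hk
          exact hlj _ hk.2
      · rwa [h5 k hki hkj, h5 k hki hkj] at hk
    · simp only [bad, mem_filter, mem_univ, true_and]; rw [hi1, hi2]; exact ⟨hx, rfl⟩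
    · simp only [bad, mem_filter, mem_univ, true_and]
      rw [h1, h2, hi1]
      intro h
      exact hlj _ h.2.symm
  exact absurd (hmin σ' hσ') (not_le.2 hlt)

/-- number of bins containing at least two elements of `S` -/
noncomputable def loss {α : Type} {t : ℕ} (β : α → Fin t) (S : Finset α) : ℕ :=
  (univ.filter (fun i : Fin t => 1 < (S.filter (fun e => β e = i)).card)).card

theorem two_loss {α : Type} {t : ℕ} (β : α → Fin t) (S : Finset α) : 2 * loss β S ≤ S.card := by
  have h1 : S.card = ∑ i : Fin t, (S.filter (fun e => β e = i)).card :=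
    card_eq_sum_card_fiberwise (fun _ _ => mem_univ _)
  rw [h1, loss, card_filter, mul_sum]
  apply sum_le_sum
  intro i _
  split_ifs <;> omega

theorem bin_lemma {α : Type} (R : Finset α) (c : α → ℕ) (t : ℕ) (ht : 0 < t)
    (hR : R.card ≤ 2 * t) (hc : ∀ k, (R.filter (fun e => c e = k)).card ≤ t) (A B : Finset α)
    (hA : A ⊆ R) (hB : B ⊆ R) (hAB : Disjoint A B) :
    ∃ β : α → Fin t, (∀ i, (R.filter (fun e => β e = i)).card ≤ 2) ∧
      (∀ e ∈ R, ∀ f ∈ R, β e = β f → c e = c f → e = f) ∧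
      (loss β A = 0 ∨ loss β A + t ≤ A.card) ∧ (loss β B = 0 ∨ loss β B + t ≤ B.card) := by
  let Ω := {e // e ∈ R} ⊕ Fin (2 * t - R.card)
  have hΩ : Fintype.card (Fin t × Bool) = Fintype.card Ω := by
    simp [Ω]; omega
  let σ0 : Fin t × Bool ≃ Ω := Fintype.equivOfCardEq hΩ
  let M := R.sup c
  let c' : Ω → ℕ := fun x => match x with
    | Sum.inl e => c e.1
    | Sum.inr k => M + 1 + k
  let l : Ω → Option Bool := fun x => match x with
    | Sum.inl e => if e.1 ∈ A then some true else if e.1 ∈ B then some false else none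
    | Sum.inr k => none
  have hM : ∀ e ∈ R, c e ≤ M := fun e he => le_sup (f := c) he
  have hc' : ∀ k, (univ.filter (fun x => c' x = k)).card ≤ t := by
    intro k
    rcases Nat.lt_or_ge M k with h | h
    · refine le_trans (card_le_one.2 ?_) ht
      intro a ha b hb
      simp only [mem_filter, mem_univ, true_and] at ha hb
      rcases a with a | a
      · have := hM a.1 a.2; simp only [c'] at ha; omega
      rcases b with b | b
      · have := hM b.1 b.2; simp only [c'] at hb; omega
      simp only [c'] at ha hb
      congr 1
      apply Fin.ext
      omega
    · refine le_trans ?_ (hc k)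
      have : univ.filter (fun x => c' x = k) ⊆
          (R.filter (fun e => c e = k)).attach.image
            (fun e => (Sum.inl ⟨e.1, (mem_filter.1 e.2).1⟩ : Ω)) := by
        intro x hx
        simp only [mem_filter, mem_univ, true_and] at hx
        rcases x with x | x
        · simp only [mem_image, mem_attach, true_and]
          exact ⟨⟨x.1, mem_filter.2 ⟨x.2, hx⟩⟩, rfl⟩
        · simp only [c'] at hx; omega
      refine (card_le_card this).trans (card_image_le.trans ?_)
      rw [card_attach]
  obtain ⟨σ, hσ, hl⟩ := arr_label σ0 c' hc' l
  let β : α → Fin t := fun e => if h : e ∈ R then (σ.symm (Sum.inl ⟨e, h⟩)).1 else ⟨0, ht⟩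
  -- position data
  have hpos : ∀ e (he : e ∈ R), ∃ d, σ (β e, d) = Sum.inl ⟨e, he⟩ := by
    intro e he
    refine ⟨(σ.symm (Sum.inl ⟨e, he⟩)).2, ?_⟩
    simp only [β, he, dif_pos, Prod.mk.eta, Equiv.apply_symm_apply]
  have htwo : ∀ e f, ∀ (he : e ∈ R) (hf : f ∈ R), β e = β f → e ≠ f →
      (σ (β e, false) = Sum.inl ⟨e, he⟩ ∧ σ (β e, true) = Sum.inl ⟨f, hf⟩) ∨
      (σ (β e, false) = Sum.inl ⟨f, hf⟩ ∧ σ (β e, true) = Sum.inl ⟨e, he⟩) := by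
    intro e f he hf hβ hne
    obtain ⟨d, hd⟩ := hpos e he
    obtain ⟨d', hd'⟩ := hpos f hf
    rw [← hβ] at hd'
    have : d ≠ d' := by
      rintro rfl
      rw [hd] at hd'
      apply hne
      exact congrArg Subtype.val (Sum.inl.inj hd')
    cases d <;> cases d'
    · exact absurd rfl this
    · left; exact ⟨hd, hd'⟩
    · right; exact ⟨hd', hd⟩
    · exact absurd rfl this
  have hS : ∀ (S : Finset α) (x : Option Bool), x ≠ none → S ⊆ R →
      (∀ e (he : e ∈ R), l (Sum.inl ⟨e, he⟩) = x ↔ e ∈ S) →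
      loss β S = 0 ∨ loss β S + t ≤ S.card := by
    intro S x hx hSR hlS
    rcases hl x hx with h | h
    · left
      rw [loss, card_eq_zero, filter_eq_empty_iff]
      intro i _ hi
      obtain ⟨e, he, f, hf, hne⟩ := one_lt_card.1 hi
      rw [mem_filter] at he hf
      have h1 := (hlS e (hSR he.1)).2 he.1
      have h2 := (hlS f (hSR hf.1)).2 hf.1
      rcases htwo e f (hSR he.1) (hSR hf.1) (he.2.trans hf.2.symm) hne with ⟨h3, h4⟩ | ⟨h3, h4⟩
      · exact h (β e) ⟨by rw [h3, h1], by rw [h4, h2]⟩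
      · exact h (β e) ⟨by rw [h3, h2], by rw [h4, h1]⟩
    · right
      have hfib : ∀ i, 1 ≤ (S.filter (fun e => β e = i)).card := by
        intro i
        have key : ∀ d, l (σ (i, d)) = x → 1 ≤ (S.filter (fun e => β e = i)).card := by
          intro d hd
          rcases hy : σ (i, d) with y | y
          · rw [hy] at hd
            have := (hlS y.1 y.2).1 hd
            apply card_pos.2
            refine ⟨y.1, mem_filter.2 ⟨this, ?_⟩⟩
            have h1 : σ.symm (Sum.inl y) = (i, d) := by rw [← hy, Equiv.symm_apply_apply]
            simp only [β, y.2, dif_pos, Subtype.coe_eta, h1]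
          · rw [hy] at hd; exact absurd hd.symm hx
        rcases h i with h | h
        · exact key _ h
        · exact key _ h
      have h1 : S.card = ∑ i : Fin t, (S.filter (fun e => β e = i)).card :=
        card_eq_sum_card_fiberwise (fun _ _ => mem_univ _)
      have h2 : t = ∑ i : Fin t, 1 := by simp
      rw [h1, loss, card_filter]
      refine le_trans (Nat.add_le_add_left (le_of_eq h2) _) ?_
      rw [← sum_add_distrib]
      apply sum_le_sum
      intro i _
      have := hfib i
      split_ifs <;> omega
  refine ⟨β, ?_, ?_, ?_, ?_⟩
  · intro i
    by_contra hcon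
    push Not at hcon
    obtain ⟨a, ha, b, hb, d, hd, hab, had, hbd⟩ := two_lt_card.1 hcon
    rw [mem_filter] at ha hb hd
    have h1 := htwo a b ha.1 hb.1 (ha.2.trans hb.2.symm) hab
    have h2 := htwo a d ha.1 hd.1 (ha.2.trans hd.2.symm) had
    rcases h1 with ⟨h3, h4⟩ | ⟨h3, h4⟩ <;> rcases h2 with ⟨h5, h6⟩ | ⟨h5, h6⟩
    · rw [h4] at h6; exact hbd (congrArg Subtype.val (Sum.inl.inj h6))
    · rw [h3] at h5; exact had (congrArg Subtype.val (Sum.inl.inj h5))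
    · rw [h3] at h5; exact hab (congrArg Subtype.val (Sum.inl.inj h5)).symm
    · rw [h3] at h5; exact hbd (congrArg Subtype.val (Sum.inl.inj h5))
  · intro e he f hf hβ hcc
    by_contra hne
    rcases htwo e f he hf hβ hne with ⟨h3, h4⟩ | ⟨h3, h4⟩
    · apply hσ (β e); rw [h3, h4]; exact hcc
    · apply hσ (β e); rw [h3, h4]; exact hcc.symm
  · apply hS A (some true) (by simp) hA
    intro e he
    by_cases h1 : e ∈ A
    · simp [l, h1]
    · by_cases h2 : e ∈ B <;> simp [l, h1, h2]
  · apply hS B (some false) (by simp) hB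
    intro e he
    by_cases h1 : e ∈ A
    · have : e ∉ B := fun h => Finset.disjoint_left.1 hAB h1 h
      simp [l, h1, this]
    · by_cases h2 : e ∈ B <;> simp [l, h1, h2]



theorem DD_le_loss {V κ : Type} {t : ℕ} (R : Finset (Sym2 V)) (β : Sym2 V → Fin t)
    (p : V → κ) : DD R β p ≤ loss β R := by
  unfold DD loss
  apply card_le_card
  intro i hi
  simp only [mem_filter, mem_univ, true_and] at hi ⊢
  obtain ⟨e, he, f, hf, hne, h1, h2, _⟩ := hi
  exact one_lt_card.2 ⟨e, mem_filter.2 ⟨he, h1⟩, f, mem_filter.2 ⟨hf, h2⟩, hne⟩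

theorem DD_inj {V κ : Type} {t : ℕ} (R : Finset (Sym2 V)) (β : Sym2 V → Fin t)
    (p : V → κ) (hp : Function.Injective p) : DD R β p = 0 := by
  unfold DD
  rw [card_eq_zero, filter_eq_empty_iff]
  rintro i _ ⟨e, he, f, hf, hne, h1, h2, _, h3⟩
  exact hne (Sym2.map.injective hp h3)

theorem DD_sub {V κ : Type} {t : ℕ} (R : Finset (Sym2 V)) (β : Sym2 V → Fin t)
    (p : V → κ) (hp : ∀ x y : κ, x = y) : DD R β p = 0 := by
  unfold DD
  rw [card_eq_zero, filter_eq_empty_iff]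
  rintro i _ ⟨e, he, f, hf, hne, h1, h2, h3, _⟩
  apply h3
  induction e with | _ u v => 
  simpa using hp _ _

/-- edges of `X` at `v` -/
noncomputable def st {V : Type} (X : Finset (Sym2 V)) (v : V) : Finset (Sym2 V) :=
  X.filter (fun e => v ∈ e)

/-- edges of `X` at `v` avoiding `w` -/
noncomputable def stm {V : Type} (X : Finset (Sym2 V)) (v w : V) : Finset (Sym2 V) :=
  X.filter (fun e => v ∈ e ∧ w ∉ e)

/-- edges of `X` at `v` or `w` -/
noncomputable def sto {V : Type} (X : Finset (Sym2 V)) (v w : V) : Finset (Sym2 V) :=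
  X.filter (fun e => v ∈ e ∨ w ∈ e)

theorem DD_one {V κ : Type} {t : ℕ} (R : Finset (Sym2 V)) (β : Sym2 V → Fin t)
    (p : V → κ) (v : V) (k : κ) (hv : ∀ x, x ≠ v → p x = k) : DD R β p ≤ loss β (st R v) := by
  have key : ∀ e : Sym2 V, ¬ (Sym2.map p e).IsDiag → v ∈ e := by
    intro e he
    induction e with | _ a b =>
    simp only [Sym2.map_mk, Sym2.mk_isDiag_iff] at he
    by_contra hc
    simp only [Sym2.mem_iff, not_or] at hc
    exact he ((hv a (Ne.symm hc.1)).trans (hv b (Ne.symm hc.2)).symm)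
  unfold DD loss
  apply card_le_card
  intro i hi
  simp only [mem_filter, mem_univ, true_and] at hi ⊢
  obtain ⟨e, he, f, hf, hne, h1, h2, h3, h4⟩ := hi
  exact one_lt_card.2 ⟨e, mem_filter.2 ⟨mem_filter.2 ⟨he, key e h3⟩, h1⟩, f,
    mem_filter.2 ⟨mem_filter.2 ⟨hf, key f (h4 ▸ h3)⟩, h2⟩, hne⟩

theorem DD_two {V κ : Type} {t : ℕ} (R : Finset (Sym2 V)) (β : Sym2 V → Fin t)
    (p : V → κ) (v w : V) (k : κ) (hv : ∀ x, x ≠ v → x ≠ w → p x = k) (hvk : p v ≠ k)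
    (hwk : p w ≠ k) (hvw : p v ≠ p w) :
    DD R β p ≤ loss β (stm R v w) + loss β (stm R w v) := by
  have hvw' : v ≠ w := fun h => hvw (h ▸ rfl)
  unfold DD loss
  refine le_trans (card_le_card ?_) (card_union_le _ _)
  intro i hi
  simp only [mem_filter, mem_univ, true_and, mem_union] at hi ⊢
  obtain ⟨e, he, f, hf, hne, h1, h2, h3, h4⟩ := hi
  have key : (v ∈ e ∧ w ∉ e ∧ v ∈ f ∧ w ∉ f) ∨ (w ∈ e ∧ v ∉ e ∧ w ∈ f ∧ v ∉ f) := by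
    induction e with | _ a b =>
    induction f with | _ d g =>
    simp only [Sym2.map_mk, Sym2.mk_isDiag_iff] at h3 h4
    rw [Sym2.eq_iff] at h4
    rw [Ne, Sym2.eq_iff] at hne
    simp only [Sym2.mem_iff]
    have ha : a = v ∨ a = w ∨ (a ≠ v ∧ a ≠ w ∧ p a = k) := by
      by_cases h : a = v
      · exact Or.inl h
      · by_cases h' : a = w
        · exact Or.inr (Or.inl h')
        · exact Or.inr (Or.inr ⟨h, h', hv a h h'⟩)
    have hb : b = v ∨ b = w ∨ (b ≠ v ∧ b ≠ w ∧ p b = k) := by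
      by_cases h : b = v
      · exact Or.inl h
      · by_cases h' : b = w
        · exact Or.inr (Or.inl h')
        · exact Or.inr (Or.inr ⟨h, h', hv b h h'⟩)
    have hd : d = v ∨ d = w ∨ (d ≠ v ∧ d ≠ w ∧ p d = k) := by
      by_cases h : d = v
      · exact Or.inl h
      · by_cases h' : d = w
        · exact Or.inr (Or.inl h')
        · exact Or.inr (Or.inr ⟨h, h', hv d h h'⟩)
    have hg : g = v ∨ g = w ∨ (g ≠ v ∧ g ≠ w ∧ p g = k) := by
      by_cases h : g = v
      · exact Or.inl h
      · by_cases h' : g = w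
        · exact Or.inr (Or.inl h')
        · exact Or.inr (Or.inr ⟨h, h', hv g h h'⟩)
    clear hv he hf h1 h2
    rcases ha with rfl | rfl | ⟨ha1, ha2, ha3⟩ <;> rcases hb with rfl | rfl | ⟨hb1, hb2, hb3⟩ <;>
    rcases hd with rfl | rfl | ⟨hd1, hd2, hd3⟩ <;> rcases hg with rfl | rfl | ⟨hg1, hg2, hg3⟩ <;>
    grind
  rcases key with ⟨k1, k2, k3, k4⟩ | ⟨k1, k2, k3, k4⟩
  · left
    exact one_lt_card.2 ⟨e, mem_filter.2 ⟨mem_filter.2 ⟨he, k1, k2⟩, h1⟩, f,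
      mem_filter.2 ⟨mem_filter.2 ⟨hf, k3, k4⟩, h2⟩, hne⟩
  · right
    exact one_lt_card.2 ⟨e, mem_filter.2 ⟨mem_filter.2 ⟨he, k1, k2⟩, h1⟩, f,
      mem_filter.2 ⟨mem_filter.2 ⟨hf, k3, k4⟩, h2⟩, hne⟩

theorem nc_le_sum {V κ : Type} [Fintype V] [Fintype κ] (p : V → κ) :
    (ncs (EE V) p).card ≤ ∑ k, ((univ.filter (fun x => p x = k)).card).choose 2 := by
  have : ncs (EE V) p ⊆ univ.biUnion (fun k => EW (univ.filter (fun x => p x = k))) := by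
    intro e he
    rw [mem_ncs] at he
    induction e with | _ a b =>
    simp only [mem_biUnion, mem_univ, true_and, EW, mem_filter, Sym2.mem_iff, forall_eq_or_imp,
      forall_eq]
    refine ⟨p b, he.1, ?_, rfl⟩
    simpa using he.2
  refine (card_le_card this).trans (card_biUnion_le.trans (le_of_eq ?_))
  exact sum_congr rfl fun k _ => card_EW _

theorem sum_sq_le {κ : Type} (S : Finset κ) (b : κ → ℕ) :
    ∑ k ∈ S, b k * b k ≤ (∑ k ∈ S, b k) * (∑ k ∈ S, b k) := by
  rw [sum_mul]
  apply sum_le_sum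
  intro k hk
  exact Nat.mul_le_mul_left _ (single_le_sum (f := b) (fun _ _ => Nat.zero_le _) hk)

theorem nc_b {V κ : Type} [Fintype V] [Fintype κ] (p : V → κ) (hp : Function.Surjective p) :
    ∃ b : κ → ℕ, (∀ k, (univ.filter (fun x => p x = k)).card = b k + 1) ∧
      (∑ k, b k) + Fintype.card κ = Fintype.card V ∧
      2 * (ncs (EE V) p).card ≤ ∑ k, b k * b k + ∑ k, b k := by
  have h1 : ∀ k, ∃ m, (univ.filter (fun x => p x = k)).card = m + 1 := by
    intro k
    obtain ⟨x, hx⟩ := hp k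
    have : 0 < (univ.filter (fun x => p x = k)).card := card_pos.2 ⟨x, by simpa using hx⟩
    exact ⟨_, (Nat.succ_pred_eq_of_pos this).symm⟩
  choose b hb using h1
  refine ⟨b, hb, ?_, ?_⟩
  · have h2 : (univ : Finset V).card = ∑ k : κ, (univ.filter (fun x => p x = k)).card :=
      card_eq_sum_card_fiberwise (fun _ _ => mem_univ _)
    simp only [hb, sum_add_distrib, card_univ, sum_const, smul_eq_mul, mul_one] at h2
    exact h2.symm
  · have h3 := nc_le_sum p
    simp only [hb] at h3
    have h4 : 2 * ∑ k, (b k + 1).choose 2 = ∑ k, b k * b k + ∑ k, b k := by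
      rw [mul_sum, ← sum_add_distrib]
      apply sum_congr rfl
      intro k _
      have := choose_two_dbl (b k + 1)
      nlinarith
    omega

theorem nc_one {V κ : Type} [Fintype V] [Fintype κ] (p : V → κ) (hp : Function.Surjective p)
    (N : ℕ) (hN : N + Fintype.card κ = Fintype.card V) :
    2 * (ncs (EE V) p).card ≤ N * N + N := by
  obtain ⟨b, h1, h2, h3⟩ := nc_b p hp
  have h4 := sum_sq_le univ b
  have h5 : ∑ k, b k = N := by omega
  rw [h5] at h3 h4
  omega

theorem nc_two {V κ : Type} [Fintype V] [Nonempty V] [Fintype κ] (p : V → κ) (hp : Function.Surjective p)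
    (N : ℕ) (hN : N + Fintype.card κ = Fintype.card V) :
    (2 * (ncs (EE V) p).card + N ≤ N * N + 2) ∨
    ∃ k0, ∀ x y, p x = p y → p x ≠ k0 → x = y := by
  obtain ⟨b, h1, h2, h3⟩ := nc_b p hp
  have h5 : ∑ k, b k = N := by omega
  by_cases h : ∃ k, 0 < b k ∧ 0 < ∑ j ∈ univ.erase k, b j
  · left
    obtain ⟨k, hk1, hk2⟩ := h
    have h6 := sum_sq_le (univ.erase k) b
    have h7 := add_sum_erase univ b (mem_univ k)
    have h8 := add_sum_erase univ (fun j => b j * b j) (mem_univ k)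
    set M := ∑ j ∈ univ.erase k, b j
    rw [h5] at h7 h3
    have h9 : 2 * (ncs (EE V) p).card ≤ b k * b k + M * M + N := by omega
    obtain ⟨u, hu⟩ : ∃ u, b k = u + 1 := ⟨b k - 1, by omega⟩
    obtain ⟨m, hm⟩ : ∃ m, M = m + 1 := ⟨M - 1, by omega⟩
    rw [← h7, hu, hm]
    rw [hu, hm] at h9
    rw [← h7, hu, hm] at h9
    nlinarith [Nat.zero_le (u * m)]
  · right
    push Not at h
    by_cases hz : ∃ k, 0 < b k
    · obtain ⟨k, hk⟩ := hz
      refine ⟨k, ?_⟩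
      intro x y hxy hx
      have h6 := h k hk
      have h7 : b (p x) = 0 := by
        have := single_le_sum (f := b) (fun _ _ => Nat.zero_le _)
          (mem_erase.2 ⟨hx, mem_univ (p x)⟩)
        omega
      have h8 := h1 (p x)
      rw [h7, zero_add] at h8
      exact card_le_one.1 h8.le x (by simp) y (by simp [hxy])
    · push Not at hz
      refine ⟨p (Classical.arbitrary V), ?_⟩
      intro x y hxy _
      have h8 := h1 (p x)
      have h9 := hz (p x)
      have h10 : (univ.filter (fun y => p y = p x)).card ≤ 1 := by omega
      exact card_le_one.1 h10 x (by simp) y (by simp [hxy])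

theorem crs_lb {V κ : Type} [Fintype V] (H : Finset (Sym2 V)) (hH : H ⊆ EE V) (p : V → κ) :
    H.card ≤ (crs H p).card + (ncs (EE V) p).card := by
  have h1 := ncs_add_crs H p
  have h2 : ncs H p ⊆ ncs (EE V) p := by
    intro e he
    rw [mem_ncs] at he ⊢
    exact ⟨hH he.1, he.2⟩
  have := card_le_card h2
  omega

theorem crs_one {V κ : Type} [Fintype V] (H : Finset (Sym2 V)) (hH : H ⊆ EE V)
    (p : V → κ) (v : V) (k : κ) (hv : ∀ x, x ≠ v → p x = k) (hvk : p v ≠ k) :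
    st H v ⊆ crs H p := by
  intro e he
  rw [st, mem_filter] at he
  rw [mem_crs]
  refine ⟨he.1, ?_⟩
  have hd := (mem_EE e).1 (hH he.1)
  induction e with | _ a b =>
  simp only [Sym2.map_mk, Sym2.mk_isDiag_iff] at hd ⊢
  rcases Sym2.mem_iff.1 he.2 with rfl | rfl
  · rw [hv b (Ne.symm hd)]; exact hvk
  · rw [hv a hd]; exact hvk.symm

theorem crs_two {V κ : Type} [Fintype V] (H : Finset (Sym2 V)) (hH : H ⊆ EE V)
    (p : V → κ) (v w : V) (k : κ) (hv : ∀ x, x ≠ v → x ≠ w → p x = k) (hvk : p v ≠ k)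
    (hwk : p w ≠ k) (hvw : p v ≠ p w) :
    sto H v w ⊆ crs H p := by
  intro e he
  rw [sto, mem_filter] at he
  rw [mem_crs]
  refine ⟨he.1, ?_⟩
  have hd := (mem_EE e).1 (hH he.1)
  have key : ∀ x y, x ≠ y → x = v ∨ x = w → p x ≠ p y := by
    intro x y hxy hx
    by_cases h1 : y = v
    · subst h1
      rcases hx with rfl | rfl
      · exact absurd rfl hxy
      · exact hvw.symm
    · by_cases h2 : y = w
      · subst h2
        rcases hx with rfl | rfl
        · exact hvw
        · exact absurd rfl hxy
      · rw [hv y h1 h2]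
        rcases hx with rfl | rfl <;> assumption
  induction e with | _ a b =>
  simp only [Sym2.map_mk, Sym2.mk_isDiag_iff] at hd ⊢
  have : (a = v ∨ a = w) ∨ (b = v ∨ b = w) := by
    rcases he.2 with h | h
    · rcases Sym2.mem_iff.1 h with h | h
      · exact Or.inl (Or.inl h.symm)
      · exact Or.inr (Or.inl h.symm)
    · rcases Sym2.mem_iff.1 h with h | h
      · exact Or.inl (Or.inr h.symm)
      · exact Or.inr (Or.inr h.symm)
  rcases this with h | h
  · exact key a b hd h
  · exact (key b a (Ne.symm hd) h).symm

theorem ar1 (t s n C : ℕ) (e : s + 1 = 2 * t) (hNn : 0 + s + 1 = n) (h : 2 * C + n = n * n) :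
    t * s ≤ C := by
  obtain rfl : n = s + 1 := by omega
  nlinarith

theorem ar2 (t u C : ℕ) (h : 2 * C + u = u * u) (h5 : 2 * t ≤ u) :
    t * (u + 1) ≤ C + 2 * t := by
  obtain ⟨y, rfl⟩ : ∃ y, u = 2 * t + y := ⟨u - 2 * t, by omega⟩
  nlinarith [Nat.zero_le (t * y), Nat.zero_le (y * y)]

theorem ar3 (t m q C X : ℕ) (e : 2 * t = m + q + 3)
    (h1 : 2 * C + (m + q + 3) = (m + q + 3) * (m + q + 3))
    (hx : 2 * X ≤ (m + 1) * (m + 1) + (m + 1)) : t * (q + 1) + t + X ≤ C + 1 := by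
  have e3 : 2 * (t * (q + 1) + t) = (m + q + 3) * (q + 2) := by rw [← e]; ring
  nlinarith [Nat.zero_le (m * q)]

theorem ar4 (u X : ℕ) (h : 2 * X + (2 * u + 1) ≤ (2 * u + 1) * (2 * u + 1) + 2) :
    (u + 1) * 1 + (u + 1) + X ≤ 2 * (u + 1) * (u + 1) + 1 := by
  nlinarith

theorem ar5 (t m q X : ℕ) (e : 2 * t = m + q + 3)
    (hx : 2 * X ≤ (m + 1) * (m + 1) + (m + 1)) : t * (q + 2) + t + X ≤ 2 * t * t + 1 := by
  have e3 : 2 * (t * (q + 2) + t) = (m + q + 3) * (q + 3) := by rw [← e]; ring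
  have e4 : 2 * (2 * t * t) = (m + q + 3) * (m + q + 3) := by rw [← e]; ring
  nlinarith [Nat.zero_le (m * q)]

theorem ar6 (t N C X : ℕ) (h : 2 * X + N ≤ N * N + 2) (ht : 2 * t ≤ N + 1) (h0 : 0 < t)
    (hch : 2 * C + (N + 1) = (N + 1) * (N + 1)) : t * 2 + t + X ≤ C + 2 * t + 1 := by
  nlinarith

theorem ar7 (t m q C X : ℕ) (e5 : 2 * t ≤ m + q + 3)
    (hch : 2 * C + (m + q + 3) = (m + q + 3) * (m + q + 3))
    (hx : 2 * X ≤ (m + 1) * (m + 1) + (m + 1)) :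
    t * (q + 3) + t + X ≤ C + 2 * t + 1 := by
  nlinarith [Nat.zero_le (m * q), Nat.mul_le_mul_right (q + 2) e5]

theorem one_big_two {V κ : Type} [Fintype κ] (p : V → κ) (hp : Function.Surjective p)
    (hκ : Fintype.card κ = 2) (k0 : κ) (hk0 : ∀ x y, p x = p y → p x ≠ k0 → x = y) :
    ∃ v, p v ≠ k0 ∧ ∀ x, x ≠ v → p x = k0 := by
  have h1 : ((univ : Finset κ).erase k0).card = 1 := by
    rw [card_erase_of_mem (mem_univ _), card_univ, hκ]
  obtain ⟨k1, hk1⟩ := card_eq_one.1 h1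
  have hall : ∀ k, k ≠ k0 → k = k1 := by
    intro k hk
    have : k ∈ (univ : Finset κ).erase k0 := mem_erase.2 ⟨hk, mem_univ _⟩
    rw [hk1] at this
    simpa using this
  have hk10 : k1 ≠ k0 := by
    have : k1 ∈ (univ : Finset κ).erase k0 := by rw [hk1]; simp
    exact (mem_erase.1 this).1
  obtain ⟨v, rfl⟩ := hp k1
  refine ⟨v, hk10, ?_⟩
  intro x hx
  by_contra hc
  exact hx (hk0 x v (hall _ hc) hc)

theorem one_big_three {V κ : Type} [Fintype κ] (p : V → κ) (hp : Function.Surjective p)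
    (hκ : Fintype.card κ = 3) (k0 : κ) (hk0 : ∀ x y, p x = p y → p x ≠ k0 → x = y) :
    ∃ v w, p v ≠ k0 ∧ p w ≠ k0 ∧ p v ≠ p w ∧ ∀ x, x ≠ v → x ≠ w → p x = k0 := by
  have h1 : ((univ : Finset κ).erase k0).card = 2 := by
    rw [card_erase_of_mem (mem_univ _), card_univ, hκ]
  obtain ⟨k1, k2, hne, hk1⟩ := card_eq_two.1 h1
  have hall : ∀ k, k ≠ k0 → k = k1 ∨ k = k2 := by
    intro k hk
    have : k ∈ (univ : Finset κ).erase k0 := mem_erase.2 ⟨hk, mem_univ _⟩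
    rw [hk1] at this
    simpa using this
  have hk10 : k1 ≠ k0 := by
    have : k1 ∈ (univ : Finset κ).erase k0 := by rw [hk1]; simp
    exact (mem_erase.1 this).1
  have hk20 : k2 ≠ k0 := by
    have : k2 ∈ (univ : Finset κ).erase k0 := by rw [hk1]; simp
    exact (mem_erase.1 this).1
  obtain ⟨v, rfl⟩ := hp k1
  obtain ⟨w, rfl⟩ := hp k2
  refine ⟨v, w, hk10, hk20, hne, ?_⟩
  intro x hx hx2
  by_contra hc
  rcases hall _ hc with h | h
  · exact hx (hk0 x v h hc)
  · exact hx2 (hk0 x w h hc)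

theorem h4_main {V : Type} [Fintype V] [Nonempty V] (t n : ℕ) (ht : 0 < t)
    (hn : Fintype.card V = n)
    (H R : Finset (Sym2 V)) (β : Sym2 V → Fin t) (hH : H ⊆ EE V) (hR : R.card ≤ 2 * (t - 1))
    (hcase : (n = 2 * t ∧ H.card = n.choose 2) ∨
      (n = 2 * t + 1 ∧ H.card = 2 * t * t ∧ ∀ v, t + loss β (st R v) ≤ (st H v).card) ∨
      (2 * t + 2 ≤ n ∧ H.card = (n - 2).choose 2 + 2 * t ∧
        (∀ v, t + loss β (st R v) ≤ (st H v).card) ∧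
        (∀ v w, v ≠ w → 2 * t + loss β (stm R v w) + loss β (stm R w v) ≤ (sto H v w).card)))
    (κ : Type) [Fintype κ] (p : V → κ) (hp : Function.Surjective p) :
    t * (Fintype.card κ - 1) + DD R β p ≤ (crs H p).card := by
  have hDD : DD R β p ≤ t - 1 := by
    have h1 := DD_le_loss R β p
    have h2 := two_loss β R
    omega
  have hsn : Fintype.card κ ≤ Fintype.card V := Fintype.card_le_of_surjective p hp
  have hs1 : 0 < Fintype.card κ := Fintype.card_pos_iff.2 ⟨p (Classical.arbitrary V)⟩
  obtain ⟨N, hN⟩ : ∃ N, N + Fintype.card κ = Fintype.card V := ⟨_, Nat.sub_add_cancel hsn⟩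
  have hlb := crs_lb H hH p
  have hnc1 := nc_one p hp N hN
  have hnc2 := nc_two p hp N hN
  obtain ⟨s, hs⟩ : ∃ s, Fintype.card κ = s + 1 := ⟨Fintype.card κ - 1, by omega⟩
  rw [hs, Nat.add_sub_cancel]
  have hNn : N + s + 1 = n := by omega
  rcases Nat.eq_zero_or_pos s with hs0 | hspos
  · subst hs0
    have : DD R β p = 0 := DD_sub R β p (fun x y => by
      have h1 : Fintype.card κ ≤ 1 := by omega
      exact Fintype.card_le_one_iff.1 h1 x y)
    rw [this]; omega
  rcases Nat.eq_zero_or_pos N with hN0 | hNpos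
  · have hb : Function.Bijective p :=
      (Fintype.bijective_iff_surjective_and_card p).2 ⟨hp, by omega⟩
    rw [DD_inj R β p hb.1]
    subst hN0
    have h1 : (ncs (EE V) p).card = 0 := by omega
    have h2 : t * s ≤ H.card := by
      rcases hcase with ⟨h, h'⟩ | ⟨h, h', _⟩ | ⟨h, h', _⟩
      · have := choose_two_dbl n
        have e : s + 1 = 2 * t := by omega
        rw [h']
        exact ar1 t s n _ e hNn this
      · have e : s = 2 * t := by omega
        rw [h', e]; nlinarith
      · obtain ⟨u, rfl⟩ : ∃ u, s = u + 1 := ⟨s - 1, by omega⟩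
        have := choose_two_dbl u
        have e : n - 2 = u := by omega
        rw [h', e]
        have h5 : 2 * t ≤ u := by omega
        exact ar2 t u _ this h5
    omega
  -- the generic bound
  have gen : t * s + t + (ncs (EE V) p).card ≤ H.card + 1 →
      t * s + DD R β p ≤ (crs H p).card := by
    intro h; omega
  rcases hcase with ⟨h, h'⟩ | ⟨h, h', hv⟩ | ⟨h, h', hv, hvw⟩
  · apply gen
    have h1 := choose_two_dbl n
    rw [h']
    obtain ⟨m, rfl⟩ : ∃ m, N = m + 1 := ⟨N - 1, by omega⟩
    obtain ⟨q, rfl⟩ : ∃ q, s = q + 1 := ⟨s - 1, by omega⟩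
    have e : 2 * t = m + q + 3 := by omega
    have e2 : n = m + q + 3 := by omega
    rw [e2] at h1 ⊢
    exact ar3 t m q _ _ e h1 hnc1
  · by_cases h2 : s = 1
    · rcases hnc2 with hnc2 | ⟨k0, hk0⟩
      · apply gen
        subst h2
        have e : N = 2 * t - 1 := by omega
        obtain ⟨u, rfl⟩ : ∃ u, t = u + 1 := ⟨t - 1, by omega⟩
        have e : N = 2 * u + 1 := by omega
        rw [e] at hnc2
        rw [h']
        exact ar4 u _ hnc2
      · obtain ⟨v, h5, h6⟩ := one_big_two p hp (by omega) k0 hk0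
        have h7 := DD_one R β p v k0 h6
        have h8 := card_le_card (crs_one H hH p v k0 h6 h5)
        have h9 := hv v
        rw [h2, mul_one]
        omega
    · apply gen
      rw [h']
      obtain ⟨m, rfl⟩ : ∃ m, N = m + 1 := ⟨N - 1, by omega⟩
      obtain ⟨q, rfl⟩ : ∃ q, s = q + 2 := ⟨s - 2, by omega⟩
      have e : 2 * t = m + q + 3 := by omega
      exact ar5 t m q _ e hnc1
  · have hch := choose_two_dbl (n - 2)
    by_cases h2 : s = 1
    · rcases hnc2 with hnc2 | ⟨k0, hk0⟩
      · apply gen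
        subst h2
        rw [h']
        have e : n - 2 = N := by omega
        rw [e] at hch ⊢
        omega
      · obtain ⟨v, h5, h6⟩ := one_big_two p hp (by omega) k0 hk0
        have h7 := DD_one R β p v k0 h6
        have h8 := card_le_card (crs_one H hH p v k0 h6 h5)
        have h9 := hv v
        rw [h2, mul_one]
        omega
    by_cases h3 : s = 2
    · rcases hnc2 with hnc2 | ⟨k0, hk0⟩
      · apply gen
        subst h3
        rw [h']
        have e : n - 2 = N + 1 := by omega
        rw [e] at hch ⊢
        exact ar6 t N _ _ hnc2 (by omega) ht hch
      · obtain ⟨v, w, h5, h6, h7, h8⟩ := one_big_three p hp (by omega) k0 hk0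
        have h9 := DD_two R β p v w k0 h8 h5 h6 h7
        have h10 := card_le_card (crs_two H hH p v w k0 h8 h5 h6 h7)
        have h11 := hvw v w (fun h => h7 (h ▸ rfl))
        rw [h3]
        omega
    · apply gen
      rw [h']
      obtain ⟨m, rfl⟩ : ∃ m, N = m + 1 := ⟨N - 1, by omega⟩
      obtain ⟨q, rfl⟩ : ∃ q, s = q + 3 := ⟨s - 3, by omega⟩
      have e : n - 2 = m + q + 3 := by omega
      rw [e] at hch ⊢
      have e5 : 2 * t ≤ m + q + 3 := by omega
      exact ar7 t m q _ _ e5 hch hnc1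



/-- edge indicator -/
noncomputable def ei {V : Type} (X : Finset (Sym2 V)) (v w : V) : ℕ := if s(v, w) ∈ X then 1 else 0

/-- degree -/
noncomputable def dg {V : Type} (X : Finset (Sym2 V)) (v : V) : ℕ := (st X v).card

theorem ei_comm {V : Type} (X : Finset (Sym2 V)) (v w : V) : ei X v w = ei X w v := by
  unfold ei; rw [Sym2.eq_swap]

theorem sto_comm {V : Type} (X : Finset (Sym2 V)) (v w : V) : sto X v w = sto X w v := by
  unfold sto; ext e; simp only [mem_filter]; tauto

theorem ei_sum {V : Type} (X : Finset (Sym2 V)) (v w : V) :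
    ei X v w = ∑ e ∈ X, if e = s(v, w) then 1 else 0 := by
  unfold ei; rw [sum_ite_eq']

theorem ei_le {V : Type} (X : Finset (Sym2 V)) (v w : V) : ei X v w ≤ 1 := by
  unfold ei; split_ifs <;> omega

theorem ei_mono {V : Type} (X Y : Finset (Sym2 V)) (h : X ⊆ Y) (v w : V) : ei X v w ≤ ei Y v w := by
  unfold ei
  split_ifs with h1 h2
  · exact le_rfl
  · exact absurd (h h1) h2
  · omega
  · omega

theorem ind_two {V : Type} (v w : V) (h : v ≠ w) (e : Sym2 V) :
    ((if v ∈ e ∨ w ∈ e then 1 else 0) + (if e = s(v, w) then 1 else 0) : ℕ) =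
    (if v ∈ e then 1 else 0) + (if w ∈ e then 1 else 0) := by
  simp only [← Sym2.mem_and_mem_iff h]
  by_cases h1 : v ∈ e <;> by_cases h2 : w ∈ e <;> simp [h1, h2]

theorem ind_three {V : Type} (x y z : V) (h1 : x ≠ y) (h2 : y ≠ z) (h3 : x ≠ z) (e : Sym2 V) :
    ((if x ∈ e ∨ y ∈ e ∨ z ∈ e then 1 else 0) + (if e = s(x, y) then 1 else 0) +
      (if e = s(y, z) then 1 else 0) + (if e = s(x, z) then 1 else 0) : ℕ) =
    (if x ∈ e then 1 else 0) + (if y ∈ e then 1 else 0) + (if z ∈ e then 1 else 0) := by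
  simp only [← Sym2.mem_and_mem_iff h1, ← Sym2.mem_and_mem_iff h2, ← Sym2.mem_and_mem_iff h3]
  have : ¬ (x ∈ e ∧ y ∈ e ∧ z ∈ e) := by
    rintro ⟨hx, hy, hz⟩
    have := (Sym2.mem_and_mem_iff h1).1 ⟨hx, hy⟩
    subst this
    rcases Sym2.mem_iff.1 hz with h | h
    · exact h3 h.symm
    · exact h2 h.symm
  by_cases h1 : x ∈ e <;> by_cases h2 : y ∈ e <;> by_cases h3 : z ∈ e <;> simp [h1, h2, h3] at this ⊢

theorem dg_two {V : Type} (X : Finset (Sym2 V)) (v w : V) (h : v ≠ w) :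
    (sto X v w).card + ei X v w = dg X v + dg X w := by
  unfold sto dg st
  rw [ei_sum, card_filter, card_filter, card_filter, ← sum_add_distrib, ← sum_add_distrib]
  exact sum_congr rfl fun e _ => ind_two v w h e

theorem dg_three {V : Type} (X : Finset (Sym2 V)) (x y z : V) (h1 : x ≠ y) (h2 : y ≠ z)
    (h3 : x ≠ z) :
    (X.filter (fun e => x ∈ e ∨ y ∈ e ∨ z ∈ e)).card + ei X x y + ei X y z + ei X x z =
      dg X x + dg X y + dg X z := by
  unfold dg st
  rw [ei_sum, ei_sum, ei_sum, card_filter, card_filter, card_filter, card_filter]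
  simp only [← sum_add_distrib]
  exact sum_congr rfl fun e _ => ind_three x y z h1 h2 h3 e

theorem touch_gen {V : Type} [Fintype V] (H : Finset (Sym2 V)) (hH : H ⊆ EE V) (S : Finset V) :
    H.card ≤ (H.filter (fun e => ∃ x ∈ S, x ∈ e)).card + (Fintype.card V - S.card).choose 2 := by
  rw [← card_filter_add_card_filter_not (fun e => ∃ x ∈ S, x ∈ e)]
  apply Nat.add_le_add_left
  rw [← card_compl, ← card_EW]
  apply card_le_card
  intro e he
  rw [mem_filter] at he
  refine mem_filter.2 ⟨hH he.1, ?_⟩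
  intro v hv
  rw [mem_compl]
  intro h
  exact he.2 ⟨v, h, hv⟩

theorem touch_one {V : Type} [Fintype V] (H : Finset (Sym2 V)) (hH : H ⊆ EE V) (v : V) :
    H.card ≤ dg H v + (Fintype.card V - 1).choose 2 := by
  have := touch_gen H hH {v}
  simpa [dg, st] using this

theorem touch_two {V : Type} [Fintype V] (H : Finset (Sym2 V)) (hH : H ⊆ EE V) (v w : V)
    (h : v ≠ w) : H.card ≤ (sto H v w).card + (Fintype.card V - 2).choose 2 := by
  have := touch_gen H hH {v, w}
  rw [card_pair h] at this
  simpa [sto] using this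

theorem touch_three {V : Type} [Fintype V] (H : Finset (Sym2 V)) (hH : H ⊆ EE V) (x y z : V)
    (h1 : x ≠ y) (h2 : y ≠ z) (h3 : x ≠ z) :
    H.card ≤ (H.filter (fun e => x ∈ e ∨ y ∈ e ∨ z ∈ e)).card + (Fintype.card V - 3).choose 2 := by
  have := touch_gen H hH {x, y, z}
  rw [card_eq_three.2 ⟨x, y, z, h1, h3, h2, rfl⟩] at this
  simpa using this

theorem stm_card {V : Type} (X : Finset (Sym2 V)) (v w : V) (h : v ≠ w) :
    (stm X v w).card + ei X v w = dg X v := by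
  unfold stm dg st
  rw [ei_sum, card_filter, card_filter, ← sum_add_distrib]
  apply sum_congr rfl
  intro e _
  simp only [← Sym2.mem_and_mem_iff h]
  by_cases h1 : v ∈ e <;> by_cases h2 : w ∈ e <;> simp [h1, h2]

theorem stm_sub {V : Type} (X : Finset (Sym2 V)) (v w : V) : stm X v w ⊆ st X v := by
  intro e he
  exact mem_filter.2 ⟨(mem_filter.1 he).1, (mem_filter.1 he).2.1⟩

theorem st_sub_insert {V : Type} (X : Finset (Sym2 V)) (v w : V) (h : v ≠ w) :
    st X v ⊆ insert s(v, w) (stm X v w) := by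
  intro e he
  rw [st, mem_filter] at he
  rw [mem_insert, stm, mem_filter, ← Sym2.mem_and_mem_iff h]
  tauto

theorem st_eq_stm {V : Type} (X : Finset (Sym2 V)) (v w : V) (h : v ≠ w) (hX : s(v, w) ∉ X) :
    st X v = stm X v w := by
  apply Subset.antisymm _ (stm_sub _ _ _)
  intro e he
  rcases mem_insert.1 (st_sub_insert X v w h he) with rfl | h1
  · exact absurd (mem_filter.1 he).1 hX
  · exact h1

theorem loss_mono {α : Type} {t : ℕ} (β : α → Fin t) (S T : Finset α) (h : S ⊆ T) :
    loss β S ≤ loss β T := by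
  unfold loss
  apply card_le_card
  intro i hi
  simp only [mem_filter, mem_univ, true_and] at hi ⊢
  exact lt_of_lt_of_le hi (card_le_card (filter_subset_filter _ h))

theorem loss_insert {α : Type} [DecidableEq α] {t : ℕ} (β : α → Fin t) (S : Finset α) (e : α) :
    loss β (insert e S) ≤ loss β S + 1 := by
  unfold loss
  have : univ.filter (fun i : Fin t => 1 < ((insert e S).filter (fun f => β f = i)).card) ⊆
      insert (β e) (univ.filter (fun i : Fin t => 1 < (S.filter (fun f => β f = i)).card)) := by
    intro i hi
    simp only [mem_filter, mem_univ, true_and, mem_insert] at hi ⊢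
    by_cases h : i = β e
    · exact Or.inl h
    · right
      rwa [filter_insert, if_neg (fun h' => h h'.symm)] at hi
  exact (card_le_card this).trans (card_insert_le _ _)

theorem protect_odd {V : Type} [Fintype V] [Nonempty V] (t : ℕ) (ht : 0 < t)
    (hn : Fintype.card V = 2 * t + 1) (c : Sym2 V → ℕ)
    (H R : Finset (Sym2 V)) (hH : H ⊆ EE V) (hRH : R ⊆ H) (hR : R.card ≤ 2 * (t - 1))
    (hc : ∀ k, (R.filter (fun e => c e = k)).card ≤ t) (hHc : H.card = 2 * t * t) :
    ∃ β : Sym2 V → Fin t, (∀ i, (R.filter (fun e => β e = i)).card ≤ 2) ∧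
      (∀ e ∈ R, ∀ f ∈ R, β e = β f → c e = c f → e = f) ∧
      ∀ v, t + loss β (st R v) ≤ (st H v).card := by
  obtain ⟨v, _, hv⟩ := exists_max_image (univ : Finset V)
    (fun x => (dg R x : ℤ) - 2 * dg H x) ⟨Classical.arbitrary V, mem_univ _⟩
  obtain ⟨β, h1, h2, h3, _⟩ := bin_lemma R c t ht (by omega) hc (st R v) ∅ (filter_subset _ _)
    (empty_subset _) (disjoint_empty_right _)
  refine ⟨β, h1, h2, ?_⟩
  have hdR : ∀ x, dg R x ≤ dg H x := fun x => card_le_card (filter_subset_filter _ hRH)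
  have hdH : ∀ x, t ≤ dg H x := by
    intro x
    have h := touch_one H hH x
    have h' := choose_two_dbl (2 * t)
    rw [hn, Nat.add_sub_cancel, hHc] at h
    nlinarith
  intro y
  change t + loss β (st R y) ≤ dg H y
  by_cases hy : y = v
  · subst hy
    have := hdR y
    have := hdH y
    have e : dg R y = (st R y).card := rfl
    omega
  · have h4 := two_loss β (st R y)
    have e : dg R y = (st R y).card := rfl
    have h5 := dg_two R y v hy
    have h6 := dg_two H y v hy
    have h7 := touch_two H hH y v hy
    have h8 := hv y (mem_univ _)
    have h9 : (sto R y v).card ≤ R.card := card_le_card (filter_subset _ _)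
    have h10 := ei_le R y v
    have h11 := choose_two_dbl (2 * t - 1)
    have h12 : 3 * t ≤ dg H y + dg H v + 1 := by
      rw [hn, hHc] at h7
      have e2 : 2 * t + 1 - 2 = 2 * t - 1 := by omega
      rw [e2] at h7
      obtain ⟨u, rfl⟩ : ∃ u, t = u + 1 := ⟨t - 1, by omega⟩
      have e3 : 2 * (u + 1) - 1 = 2 * u + 1 := by omega
      rw [e3] at h7 h11
      nlinarith
    by_contra hcon
    omega

theorem triple_ineq {V : Type} [Fintype V] (t n : ℕ) (ht : 0 < t)
    (hn : Fintype.card V = n) (hnt : 2 * t + 2 ≤ n)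
    (H R : Finset (Sym2 V)) (hH : H ⊆ EE V) (hRH : R ⊆ H) (hR : R.card ≤ 2 * (t - 1))
    (hHc : H.card = (n - 2).choose 2 + 2 * t) (x y z : V) (h1 : x ≠ y) (h2 : y ≠ z) (h3 : x ≠ z) :
    ((dg R x : ℤ) - 2 * dg H x) + ((dg R y : ℤ) - 2 * dg H y) + ((dg R z : ℤ) - 2 * dg H z) +
      ei H x y + ei H y z + ei H x z ≤ - 6 * t := by
  have a1 := dg_three R x y z h1 h2 h3
  have a2 := dg_three H x y z h1 h2 h3
  have a3 := touch_three H hH x y z h1 h2 h3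
  have a4 : (R.filter (fun e => x ∈ e ∨ y ∈ e ∨ z ∈ e)).card ≤ R.card :=
    card_le_card (filter_subset _ _)
  have a5 := ei_mono R H hRH x y
  have a6 := ei_mono R H hRH y z
  have a7 := ei_mono R H hRH x z
  have a8 := choose_two_succ (n - 3)
  have e : n - 3 + 1 = n - 2 := by omega
  rw [e] at a8
  rw [hn] at a3
  omega

set_option maxHeartbeats 1000000 in
theorem protect_big {V : Type} [Fintype V] (t n : ℕ) (ht : 0 < t)
    (hn : Fintype.card V = n) (hnt : 2 * t + 2 ≤ n) (c : Sym2 V → ℕ)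
    (H R : Finset (Sym2 V)) (hH : H ⊆ EE V) (hRH : R ⊆ H) (hR : R.card ≤ 2 * (t - 1))
    (hc : ∀ k, (R.filter (fun e => c e = k)).card ≤ t)
    (hHc : H.card = (n - 2).choose 2 + 2 * t) (hdH : ∀ x, t ≤ dg H x) :
    ∃ β : Sym2 V → Fin t, (∀ i, (R.filter (fun e => β e = i)).card ≤ 2) ∧
      (∀ e ∈ R, ∀ f ∈ R, β e = β f → c e = c f → e = f) ∧
      (∀ v, t + loss β (st R v) ≤ (st H v).card) ∧
      (∀ v w, v ≠ w → 2 * t + loss β (stm R v w) + loss β (stm R w v) ≤ (sto H v w).card) := by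
  have hcard : 1 < (univ : Finset V).card := by rw [card_univ]; omega
  have hex : ∃ v w : V, v ≠ w ∧ dg H v ≤ dg H w ∧ ∀ y, y ≠ v → y ≠ w →
      (dg R y : ℤ) - 2 * dg H y ≤ (dg R v : ℤ) - 2 * dg H v ∧
      (dg R y : ℤ) - 2 * dg H y ≤ (dg R w : ℤ) - 2 * dg H w := by
    obtain ⟨v, _, hv⟩ := exists_max_image (univ : Finset V)
      (fun x => (dg R x : ℤ) - 2 * dg H x) (card_pos.1 (by omega))
    obtain ⟨w, hw, hw2⟩ := exists_max_image ((univ : Finset V).erase v)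
      (fun x => (dg R x : ℤ) - 2 * dg H x)
      (card_pos.1 (by rw [card_erase_of_mem (mem_univ _)]; omega))
    have hvw := (mem_erase.1 hw).1
    rcases le_total (dg H v) (dg H w) with h | h
    · exact ⟨v, w, hvw.symm, h, fun y h1 h2 => ⟨hv y (mem_univ _),
        hw2 y (mem_erase.2 ⟨h1, mem_univ _⟩)⟩⟩
    · exact ⟨w, v, hvw, h, fun y h1 h2 => ⟨hw2 y (mem_erase.2 ⟨h2, mem_univ _⟩),
        hv y (mem_univ _)⟩⟩
  obtain ⟨v, w, hvw, hdvw, hmax⟩ := hex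
  have hdisj : Disjoint (st R v) (stm R w v) := by
    refine Finset.disjoint_left.2 ?_
    intro e h1 h2
    exact (mem_filter.1 h2).2.2 (mem_filter.1 h1).2
  obtain ⟨β, h1, h2, h3, h4⟩ := bin_lemma R c t ht (by omega) hc (st R v) (stm R w v)
    (filter_subset _ _) (filter_subset _ _) hdisj
  have hAB : (st R v).card + (stm R w v).card ≤ R.card := by
    rw [← card_union_of_disjoint hdisj]
    exact card_le_card (union_subset (filter_subset _ _) (filter_subset _ _))
  have hsw_eq : s(w, v) = s(v, w) := Sym2.eq_swap
  have hdR : ∀ x, dg R x ≤ dg H x := fun x => card_le_card (filter_subset_filter _ hRH)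
  have tri := triple_ineq t n ht hn hnt H R hH hRH hR hHc
  have h2t : ∀ x y, x ≠ y → 2 * t ≤ (sto H x y).card := by
    intro x y hxy
    have := touch_two H hH x y hxy
    rw [hn] at this
    omega
  have hst : ∀ x, dg R x = (st R x).card := fun _ => rfl
  have hlossm : ∀ x y, loss β (stm R x y) ≤ loss β (st R x) :=
    fun x y => loss_mono β _ _ (stm_sub R x y)
  have hout : ∀ y, y ≠ v → y ≠ w → (dg R y : ℤ) - 2 * dg H y ≤ - 2 * t := by
    intro y hy1 hy2
    have := hmax y hy1 hy2
    have := tri y v w hy1 hvw hy2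
    omega
  have hsv : t + loss β (st R v) ≤ dg H v := by
    have := hdR v
    have := hdH v
    have := hst v
    omega
  have htwo_vw := dg_two H v w hvw
  have hBc := stm_card R w v hvw.symm
  have hAc := stm_card R v w hvw
  rw [ei_comm R w v] at hBc
  have hsw : t + loss β (st R w) ≤ dg H w := by
    have a1 := hdR w
    have a2 := hdH w
    by_cases hR1 : s(v, w) ∈ R
    · have e1 : ei R v w = 1 := if_pos hR1
      have e2 : ei H v w = 1 := if_pos (hRH hR1)
      have a3 := h2t v w hvw
      have a4 := (loss_mono β _ _ (st_sub_insert R w v hvw.symm)).trans (loss_insert β _ _)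
      omega
    · have e1 : ei R v w = 0 := if_neg hR1
      have a3 := st_eq_stm R w v hvw.symm (by rw [hsw_eq]; exact hR1)
      rw [a3]
      omega
  have hsingle : ∀ y, t + loss β (st R y) ≤ dg H y := by
    intro y
    by_cases hy1 : y = v
    · subst hy1; exact hsv
    by_cases hy2 : y = w
    · subst hy2; exact hsw
    have a1 := hout y hy1 hy2
    have a2 := two_loss β (st R y)
    have a3 := hst y
    omega
  have hspare : ∀ y, (dg R y : ℤ) - 2 * dg H y < - 2 * t → t + loss β (st R y) + 1 ≤ dg H y := by
    intro y hy
    have a2 := two_loss β (st R y)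
    have a3 := hst y
    omega
  have hpair_out : ∀ x y, x ≠ y → y ≠ v → y ≠ w →
      2 * t + loss β (stm R x y) + loss β (stm R y x) ≤ (sto H x y).card := by
    intro x y hxy hy1 hy2
    have b1 := dg_two H x y hxy
    have b2 := hsingle x
    have b3 := hsingle y
    have b4 := hlossm x y
    have b5 := hlossm y x
    have b6 := ei_le H x y
    by_cases hy : (dg R y : ℤ) - 2 * dg H y < - 2 * t
    · have := hspare y hy
      omega
    · have c1 := hmax y hy1 hy2
      have c2 := tri y v w hy1 hvw hy2
      by_cases hxv : x = v
      · subst hxv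
        rw [ei_comm] at b1
        omega
      by_cases hxw : x = w
      · subst hxw
        rw [ei_comm] at b1
        omega
      by_cases hx : (dg R x : ℤ) - 2 * dg H x < - 2 * t
      · have := hspare x hx
        omega
      · have c3 := tri x y v hxy hy1 hxv
        omega
  have hpair_vw : 2 * t + loss β (stm R v w) + loss β (stm R w v) ≤ (sto H v w).card := by
    have a1 := h2t v w hvw
    have a2 := hlossm v w
    have a3 := hlossm w v
    have a4 := hdR v
    have a5 := hdR w
    have a6 := hdH v
    have a7 := hdH w
    have a8 := hst v
    by_cases hH1 : s(v, w) ∈ H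
    · have e2 : ei H v w = 1 := if_pos hH1
      by_cases hR1 : s(v, w) ∈ R
      · have e1 : ei R v w = 1 := if_pos hR1
        omega
      · have e1 : ei R v w = 0 := if_neg hR1
        have lt : ∀ x y, x ≠ y → s(x, y) ∈ H → s(x, y) ∉ R → dg R x < dg H x := by
          intro x y hxy i1 i2
          apply card_lt_card
          refine (Finset.ssubset_iff_of_subset (filter_subset_filter _ hRH)).2 ⟨s(x, y), ?_, ?_⟩
          · exact mem_filter.2 ⟨i1, Sym2.mem_mk_left x y⟩
          · intro h; exact i2 (mem_filter.1 h).1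
        have l1 := lt v w hvw hH1 hR1
        have l2 := lt w v hvw.symm (by rw [hsw_eq]; exact hH1)
          (by rw [hsw_eq]; exact hR1)
        omega
    · have e2 : ei H v w = 0 := if_neg hH1
      omega
  refine ⟨β, h1, h2, hsingle, ?_⟩
  intro x y hxy
  by_cases hy : y ≠ v ∧ y ≠ w
  · exact hpair_out x y hxy hy.1 hy.2
  by_cases hx : x ≠ v ∧ x ≠ w
  · have := hpair_out y x hxy.symm hx.1 hx.2
    rw [sto_comm]
    omega
  by_cases hx1 : x = v
  · have hy1 : y = w := by
      by_contra h
      exact hy ⟨fun h' => hxy (hx1.trans h'.symm), h⟩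
    subst hx1 hy1
    exact hpair_vw
  · have hx2 : x = w := by
      by_contra h
      exact hx ⟨hx1, h⟩
    have hy1 : y = v := by
      by_contra h
      exact hy ⟨h, fun h' => hxy (hx2.trans h'.symm)⟩
    subst hx2 hy1
    rw [sto_comm]
    omega



theorem merge_colors {V : Type} [Fintype V] (c : Sym2 V → ℕ) (t m : ℕ) (hm : 0 < m)
    (h : m ≤ ((EE V).image c).card) :
    ∃ c' : Sym2 V → ℕ, ((EE V).image c').card = m ∧
      (HasRainbowSpanningTrees (⊤ : SimpleGraph V) c' t →
        HasRainbowSpanningTrees (⊤ : SimpleGraph V) c t) := by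
  obtain ⟨S, hS, hSm⟩ := Finset.exists_subset_card_eq h
  obtain ⟨x0, hx0⟩ : S.Nonempty := card_pos.1 (by omega)
  refine ⟨fun e => if c e ∈ S then c e else x0, ?_, ?_⟩
  · rw [← hSm]
    congr 1
    ext y
    simp only [mem_image]
    constructor
    · rintro ⟨e, he, rfl⟩
      split_ifs with h1
      · exact h1
      · exact hx0
    · intro hy
      obtain ⟨e, he, rfl⟩ := mem_image.1 (hS hy)
      exact ⟨e, he, if_pos hy⟩
  · rintro ⟨T, h1, h2, h3, h4⟩
    refine ⟨T, h1, h2, ?_, h4⟩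
    intro i a ha b hb hab
    apply h3 i ha hb
    simp only [hab]

/-- the elements of `H` whose color is repeated in `H` -/
noncomputable def Rp {α : Type} (H : Finset α) (c : α → ℕ) : Finset α :=
  H.filter (fun e => ∃ f ∈ H, f ≠ e ∧ c f = c e)

theorem rp_sub {α : Type} (H : Finset α) (c : α → ℕ) : Rp H c ⊆ H := filter_subset _ _

theorem mem_rp {α : Type} (H : Finset α) (c : α → ℕ) (e f : α) (he : e ∈ H) (hf : f ∈ H)
    (h : f ≠ e) (hc : c f = c e) : e ∈ Rp H c := mem_filter.2 ⟨he, f, hf, h, hc⟩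

theorem excess_sum {α : Type} (H : Finset α) (c : α → ℕ) (s : ℕ)
    (h : H.card = (H.image c).card + s) :
    ∑ k ∈ H.image c, ((H.filter (fun e => c e = k)).card - 1) = s := by
  have h1 : H.card = ∑ k ∈ H.image c, (H.filter (fun e => c e = k)).card :=
    card_eq_sum_card_fiberwise (fun e he => mem_image_of_mem c he)
  have h2 : ∑ k ∈ H.image c, (H.filter (fun e => c e = k)).card =
      ∑ k ∈ H.image c, (((H.filter (fun e => c e = k)).card - 1) + 1) := by
    apply sum_congr rfl
    intro k hk
    obtain ⟨e, he, rfl⟩ := mem_image.1 hk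
    have : 0 < (H.filter (fun f => c f = c e)).card :=
      card_pos.2 ⟨e, mem_filter.2 ⟨he, rfl⟩⟩
    omega
  rw [sum_add_distrib, sum_const, smul_eq_mul, mul_one] at h2
  omega

theorem rp_card {α : Type} (H : Finset α) (c : α → ℕ) (s : ℕ)
    (h : H.card = (H.image c).card + s) : (Rp H c).card ≤ 2 * s := by
  have h1 : (Rp H c).card = ∑ k ∈ H.image c, ((Rp H c).filter (fun e => c e = k)).card :=
    card_eq_sum_card_fiberwise (fun e he => mem_image_of_mem c (filter_subset _ _ he))
  rw [h1, ← excess_sum H c s h, mul_sum]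
  apply sum_le_sum
  intro k _
  have h3 : ((Rp H c).filter (fun e => c e = k)).card ≤ (H.filter (fun e => c e = k)).card :=
    card_le_card (filter_subset_filter _ (filter_subset _ _))
  rcases Finset.eq_empty_or_nonempty ((Rp H c).filter (fun e => c e = k)) with h2 | ⟨e, he⟩
  · rw [h2]; simp
  · obtain ⟨he1, he2⟩ := mem_filter.1 he
    obtain ⟨he3, f, hf, hfe, hfc⟩ := mem_filter.1 he1
    have : 1 < (H.filter (fun e => c e = k)).card :=
      one_lt_card.2 ⟨e, mem_filter.2 ⟨he3, he2⟩, f, mem_filter.2 ⟨hf, hfc.trans he2⟩, hfe.symm⟩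
    omega

theorem rp_fiber {α : Type} (H : Finset α) (c : α → ℕ) (s : ℕ)
    (h : H.card = (H.image c).card + s) (k : ℕ) :
    ((Rp H c).filter (fun e => c e = k)).card ≤ s + 1 := by
  have h3 : ((Rp H c).filter (fun e => c e = k)).card ≤ (H.filter (fun e => c e = k)).card :=
    card_le_card (filter_subset_filter _ (filter_subset _ _))
  by_cases hk : k ∈ H.image c
  · have h4 := single_le_sum (f := fun k => (H.filter (fun e => c e = k)).card - 1)
      (fun _ _ => Nat.zero_le _) hk
    rw [excess_sum H c s h] at h4
    omega
  · have : H.filter (fun e => c e = k) = ∅ := by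
      apply filter_eq_empty_iff.2
      intro e he hek
      exact hk (mem_image.2 ⟨e, he, hek⟩)
    rw [this] at h3
    rw [card_empty] at h3
    omega

/-- choose representatives and extend -/
theorem exists_full {α : Type} (E : Finset α) (c : α → ℕ) (K : ℕ)
    (h1 : (E.image c).card ≤ K) (h2 : K ≤ E.card) :
    ∃ H, H ⊆ E ∧ H.card = K ∧ H.image c = E.image c := by
  obtain ⟨S, hS, hinj⟩ : ∃ S ⊆ E, S.image c = E.image c ∧ S.card = (E.image c).card := by
    have hsurj : Set.SurjOn c (E : Set α) ((E.image c : Finset ℕ) : Set ℕ) := by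
      rw [coe_image]; exact Set.surjOn_image c _
    obtain ⟨S, hS, hS3, hS2⟩ := Finset.exists_subset_injOn_image_eq_of_surjOn _ _ hsurj
    exact ⟨S, by exact_mod_cast hS, hS2, by rw [← hS2, card_image_of_injOn hS3]⟩
  obtain ⟨H, hSH, hHE, hH⟩ := Finset.exists_subsuperset_card_eq hS (hinj.2.trans_le h1) h2
  refine ⟨H, hHE, hH, Finset.Subset.antisymm (image_subset_image hHE) ?_⟩
  rw [← hinj.1]
  exact image_subset_image hSH

theorem exch {V : Type} [Fintype V] (t n : ℕ) (ht : 0 < t)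
    (hn : Fintype.card V = n) (hnt : 2 * t + 2 ≤ n) (c : Sym2 V → ℕ)
    (hm : ((EE V).image c).card = (n - 2).choose 2 + t + 1) :
    ∃ H, H ⊆ EE V ∧ H.card = (n - 2).choose 2 + 2 * t ∧ H.image c = (EE V).image c ∧
      ∀ x, t ≤ dg H x := by
  have hs1 := choose_two_succ (n - 1)
  have hs2 := choose_two_succ (n - 2)
  have e1 : n - 1 + 1 = n := by omega
  have e2 : n - 2 + 1 = n - 1 := by omega
  rw [e1] at hs1
  rw [e2] at hs2
  have hE : (EE V).card = n.choose 2 := by rw [card_EE, hn]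
  let F := (EE V).powerset.filter (fun H => H.card = (n - 2).choose 2 + 2 * t ∧
    H.image c = (EE V).image c)
  have hF : ∀ H, H ∈ F ↔ H ⊆ EE V ∧ H.card = (n - 2).choose 2 + 2 * t ∧
    H.image c = (EE V).image c := by
    intro H; simp only [F, mem_filter, mem_powerset]
  obtain ⟨H0, a1, a2, a3⟩ := exists_full (EE V) c ((n - 2).choose 2 + 2 * t) (by omega) (by omega)
  obtain ⟨H, hHF, hmin⟩ := exists_min_image F (fun H => ∑ x : V, (t - dg H x))
    ⟨H0, (hF H0).2 ⟨a1, a2, a3⟩⟩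
  obtain ⟨hH, hHc, hHi⟩ := (hF H).1 hHF
  refine ⟨H, hH, hHc, hHi, ?_⟩
  by_contra hcon
  push Not at hcon
  obtain ⟨v, hv⟩ := hcon
  have hx : ∀ x, x ≠ v → t + 1 ≤ dg H x := by
    intro x hxv
    have b1 := touch_two H hH x v hxv
    have b2 := dg_two H x v hxv
    rw [hn] at b1
    omega
  obtain ⟨f, hfE, hfH⟩ : ∃ f ∈ st (EE V) v, f ∉ st H v := by
    by_contra hcon
    push Not at hcon
    have b1 := card_le_card (show st (EE V) v ⊆ st H v from fun f hf => hcon f hf)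
    have b2 := touch_one (EE V) (Finset.Subset.refl _) v
    rw [hn, hE] at b2
    unfold dg at b2 hv
    omega
  obtain ⟨hfE, hvf⟩ := mem_filter.1 hfE
  have hfH : f ∉ H := fun h => hfH (mem_filter.2 ⟨h, hvf⟩)
  obtain ⟨e, heH, hve, hce⟩ : ∃ e ∈ H, v ∉ e ∧ c e ∈ ((insert f H).erase e).image c := by
    by_contra hcon
    push Not at hcon
    have hinj : Set.InjOn c ((insert f (H.filter (fun e => v ∉ e)) : Finset (Sym2 V)) :
        Set (Sym2 V)) := by
      have key : ∀ a b, a ∈ H.filter (fun e => v ∉ e) →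
          b ∈ insert f (H.filter (fun e => v ∉ e)) → c a = c b → a = b := by
        intro a b ha hb hab
        by_contra hne
        obtain ⟨ha1, ha2⟩ := mem_filter.1 ha
        refine hcon a ha1 ha2 (mem_image.2 ⟨b, mem_erase.2 ⟨fun h => hne h.symm, ?_⟩, hab.symm⟩)
        rcases mem_insert.1 hb with h | h
        · exact mem_insert.2 (Or.inl h)
        · exact mem_insert.2 (Or.inr (filter_subset _ _ h))
      intro a ha b hb hab
      rcases mem_insert.1 (mem_coe.1 ha) with h | h
      · rcases mem_insert.1 (mem_coe.1 hb) with h' | h'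
        · rw [h, h']
        · exact (key b a h' (mem_coe.1 ha) hab.symm).symm
      · exact key a b h (mem_coe.1 hb) hab
    have b1 := card_image_of_injOn hinj
    rw [card_insert_of_notMem (fun h => hfH (filter_subset _ _ h))] at b1
    have b2 : (insert f (H.filter (fun e => v ∉ e))).image c ⊆ (EE V).image c := by
      apply image_subset_image
      exact insert_subset hfE ((filter_subset _ _).trans hH)
    have b3 := card_le_card b2
    have b4 := card_filter_add_card_filter_not (s := H) (fun e => v ∈ e)
    unfold dg st at hv
    omega
  have hef : e ≠ f := fun h => hfH (h ▸ heH)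
  have hH' : (insert f H).erase e ∈ F := by
    refine (hF _).2 ⟨?_, ?_, ?_⟩
    · exact (erase_subset _ _).trans (insert_subset hfE hH)
    · rw [card_erase_of_mem (mem_insert_of_mem heH), card_insert_of_notMem hfH]
      omega
    · apply Finset.Subset.antisymm
      · exact image_subset_image ((erase_subset _ _).trans (insert_subset hfE hH))
      · rw [← hHi]
        intro y hy
        obtain ⟨g, hg, rfl⟩ := mem_image.1 hy
        by_cases hge : g = e
        · rw [hge]; exact hce
        · exact mem_image_of_mem c (mem_erase.2 ⟨hge, mem_insert_of_mem hg⟩)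
  have hd1 : dg H v + 1 ≤ dg ((insert f H).erase e) v := by
    unfold dg
    have : f ∉ st H v := fun h => hfH (mem_filter.1 h).1
    rw [← card_insert_of_notMem this]
    apply card_le_card
    intro g hg
    rcases mem_insert.1 hg with rfl | hg
    · exact mem_filter.2 ⟨mem_erase.2 ⟨hef.symm, mem_insert_self _ _⟩, hvf⟩
    · obtain ⟨g1, g2⟩ := mem_filter.1 hg
      exact mem_filter.2 ⟨mem_erase.2 ⟨fun h => hve (h ▸ g2), mem_insert_of_mem g1⟩, g2⟩
  have hd2 : ∀ x, dg H x ≤ dg ((insert f H).erase e) x + 1 := by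
    intro x
    unfold dg
    have : st H x ⊆ insert e (st ((insert f H).erase e) x) := by
      intro g hg
      obtain ⟨g1, g2⟩ := mem_filter.1 hg
      by_cases hge : g = e
      · exact mem_insert.2 (Or.inl hge)
      · exact mem_insert.2 (Or.inr (mem_filter.2 ⟨mem_erase.2 ⟨hge, mem_insert_of_mem g1⟩, g2⟩))
    exact (card_le_card this).trans (card_insert_le _ _)
  have hlt : ∑ x : V, (t - dg ((insert f H).erase e) x) < ∑ x : V, (t - dg H x) := by
    apply sum_lt_sum
    · intro x _
      by_cases hxv : x = v
      · subst hxv; omega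
      · have := hx x hxv
        have := hd2 x
        omega
    · exact ⟨v, mem_univ _, by omega⟩
  exact absurd (hmin _ hH') (not_le.2 hlt)

theorem finish {V : Type} [Fintype V] [Nonempty V] (t n : ℕ) (ht : 0 < t)
    (hn : Fintype.card V = n) (c : Sym2 V → ℕ) (H : Finset (Sym2 V)) (hH : H ⊆ EE V)
    (hs : H.card = (H.image c).card + (t - 1))
    (hcase : (n = 2 * t ∧ H.card = n.choose 2) ∨ (n = 2 * t + 1 ∧ H.card = 2 * t * t) ∨
      (2 * t + 2 ≤ n ∧ H.card = (n - 2).choose 2 + 2 * t ∧ ∀ x, t ≤ dg H x)) :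
    HasRainbowSpanningTrees (⊤ : SimpleGraph V) c t := by
  have hRH : Rp H c ⊆ H := rp_sub H c
  have hR := rp_card H c (t - 1) hs
  have hfib : ∀ k, ((Rp H c).filter (fun e => c e = k)).card ≤ t := by
    intro k
    have := rp_fiber H c (t - 1) hs k
    omega
  have main : ∀ β : Sym2 V → Fin t, (∀ i, ((Rp H c).filter (fun e => β e = i)).card ≤ 2) →
      (∀ e ∈ Rp H c, ∀ f ∈ Rp H c, β e = β f → c e = c f → e = f) →
      ((n = 2 * t ∧ H.card = n.choose 2) ∨ (n = 2 * t + 1 ∧ H.card = 2 * t * t ∧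
          ∀ v, t + loss β (st (Rp H c) v) ≤ (st H v).card) ∨
        (2 * t + 2 ≤ n ∧ H.card = (n - 2).choose 2 + 2 * t ∧
          (∀ v, t + loss β (st (Rp H c) v) ≤ (st H v).card) ∧
          ∀ v w, v ≠ w → 2 * t + loss β (stm (Rp H c) v w) + loss β (stm (Rp H c) w v) ≤
            (sto H v w).card)) →
      HasRainbowSpanningTrees (⊤ : SimpleGraph V) c t := by
    intro β hβ1 hβ2 hβ3
    refine thmA c t H (Rp H c) β (fun e he => (mem_EE e).1 (hH he)) hRH ?_ hβ2 hβ1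
      (h4_main t n ht hn H (Rp H c) β hH hR hβ3)
    intro e he heR f hf hef
    by_contra hne
    exact heR (mem_rp H c e f he hf (fun h => hne h.symm) hef.symm)
  rcases hcase with ⟨h1, h2⟩ | ⟨h1, h2⟩ | ⟨h1, h2, h3⟩
  · obtain ⟨β, b1, b2, _⟩ := bin_lemma (Rp H c) c t ht (by omega) hfib ∅ ∅ (empty_subset _)
      (empty_subset _) (disjoint_empty_right _)
    exact main β b1 b2 (Or.inl ⟨h1, h2⟩)
  · obtain ⟨β, b1, b2, b3⟩ := protect_odd t ht (hn.trans h1) c H (Rp H c) hH hRH hR hfib h2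
    exact main β b1 b2 (Or.inr (Or.inl ⟨h1, h2, b3⟩))
  · obtain ⟨β, b1, b2, b3, b4⟩ := protect_big t n ht hn h1 c H (Rp H c) hH hRH hR hfib h2 h3
    exact main β b1 b2 (Or.inr (Or.inr ⟨h1, h2, b3, b4⟩))

theorem upper_big (n t : ℕ) (ht : 0 < t) (h : 2 * t + 2 ≤ n) :
    antiRamsey (⊤ : SimpleGraph (Fin n)) t ≤ (n - 2).choose 2 + t := by
  have : Nonempty (Fin n) := ⟨⟨0, by omega⟩⟩
  apply antiRamsey_le
  intro c hc
  obtain ⟨c', h1, h2⟩ := merge_colors c t ((n - 2).choose 2 + t + 1) (by omega) hc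
  apply h2
  obtain ⟨H, a1, a2, a3, a4⟩ := exch t n ht (Fintype.card_fin n) h c' h1
  refine finish t n ht (Fintype.card_fin n) c' H a1 ?_ (Or.inr (Or.inr ⟨h, a2, a4⟩))
  rw [a3, h1, a2]
  omega

theorem upper_odd (n t : ℕ) (ht : 0 < t) (h : n = 2 * t + 1) :
    antiRamsey (⊤ : SimpleGraph (Fin n)) t ≤ (n - 1).choose 2 := by
  have : Nonempty (Fin n) := ⟨⟨0, by omega⟩⟩
  apply antiRamsey_le
  intro c hc
  obtain ⟨c', h1, h2⟩ := merge_colors c t ((n - 1).choose 2 + 1) (by omega) hc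
  apply h2
  have hs1 := choose_two_succ (n - 1)
  have e1 : n - 1 + 1 = n := by omega
  rw [e1] at hs1
  have hE : (EE (Fin n)).card = n.choose 2 := by rw [card_EE, Fintype.card_fin]
  have hd : (n - 1).choose 2 + t = 2 * t * t := by
    have := choose_two_dbl (2 * t)
    have e : n - 1 = 2 * t := by omega
    rw [e]
    nlinarith
  obtain ⟨H, a1, a2, a3⟩ := exists_full (EE (Fin n)) c' ((n - 1).choose 2 + t) (by omega) (by omega)
  refine finish t n ht (Fintype.card_fin n) c' H a1 ?_ (Or.inr (Or.inl ⟨h, a2.trans hd⟩))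
  rw [a3, h1, a2]
  omega

theorem upper_even (n t : ℕ) (ht : 0 < t) (h : n = 2 * t) :
    antiRamsey (⊤ : SimpleGraph (Fin n)) t ≤ n.choose 2 - t := by
  have : Nonempty (Fin n) := ⟨⟨0, by omega⟩⟩
  apply antiRamsey_le
  intro c hc
  obtain ⟨c', h1, h2⟩ := merge_colors c t (n.choose 2 - t + 1) (by omega) hc
  apply h2
  have hE : (EE (Fin n)).card = n.choose 2 := by rw [card_EE, Fintype.card_fin]
  have hd : t ≤ n.choose 2 := by
    have := choose_two_dbl n
    subst h
    nlinarith
  refine finish t n ht (Fintype.card_fin n) c' (EE (Fin n)) (Finset.Subset.refl _) ?_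
    (Or.inl ⟨h, hE⟩)
  rw [h1, hE]
  omega

/-- The anti-Ramsey number of `t` edge-disjoint rainbow
spanning trees in the complete graph `K_n`. -/
theorem stmt2 (n t : ℕ) (hn : 0 < n) (ht : 0 < t) :
    (2 * t + 2 ≤ n → antiRamsey (⊤ : SimpleGraph (Fin n)) t = (n - 2).choose 2 + t) ∧
    (n = 2 * t + 1 → antiRamsey (⊤ : SimpleGraph (Fin n)) t = (n - 1).choose 2) ∧
    (n = 2 * t → antiRamsey (⊤ : SimpleGraph (Fin n)) t = n.choose 2 - t) ∧
    (n < 2 * t → antiRamsey (⊤ : SimpleGraph (Fin n)) t = n.choose 2) := by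
  refine ⟨fun h => ?_, fun h => ?_, fun h => ?_, fun h => small_case n t h⟩
  · exact le_antisymm (upper_big n t ht h) (lower_big n t ht h)
  · exact le_antisymm (upper_odd n t ht h) (lower_odd n t ht h)
  · exact le_antisymm (upper_even n t ht h) (lower_even n t ht h)
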